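/- arXiv:2501.05968 — 5 statements merged into one kernel-verified Lean document; each statement's English description precedes it below -/
import Mathlib

section
/- Let D be an oriented graph on n vertices with minimum degree δ satisfying 1 < δ < n/2, and suppose d(u) + d(v) ≥ n + δ − 2 for every pair of non-adjacent vertices u and v. Then D contains a Hamilton oriented cycle C with σ_max(C) ≥ n − δ. -/
/-- A digraph given by the arc relation `A` is an oriented graph: no loops and at most
one arc between any two vertices. -/
def IsOriented {V : Type*} (A : V → V → Prop) : Prop :=
  ∀ u v, A u v → u ≠ v ∧ ¬ A v u

/-- The degree of `v` in the underlying graph of the digraph `A`. -/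
noncomputable def deg {V : Type*} [Fintype V] (A : V → V → Prop) (v : V) : ℕ :=
  Nat.card {u : V // A v u ∨ A u v}

/-- `e` lists the vertices of a Hamilton oriented cycle of the digraph `A`:
consecutive vertices are joined by an arc in one of the two directions. -/
def IsHamOrientedCycle {V : Type*} [Fintype V] (A : V → V → Prop)
    (e : ZMod (Fintype.card V) ≃ V) : Prop :=
  ∀ i, A (e i) (e (i + 1)) ∨ A (e (i + 1)) (e i)

/-- The number of forward arcs of the oriented cycle listed by `e`. -/
noncomputable def sigmaPlus {V : Type*} [Fintype V] (A : V → V → Prop)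
    (e : ZMod (Fintype.card V) ≃ V) : ℕ :=
  Nat.card {i : ZMod (Fintype.card V) // A (e i) (e (i + 1))}

/-- The number of backward arcs of the oriented cycle listed by `e`. -/
noncomputable def sigmaMinus {V : Type*} [Fintype V] (A : V → V → Prop)
    (e : ZMod (Fintype.card V) ≃ V) : ℕ :=
  Nat.card {i : ZMod (Fintype.card V) // A (e (i + 1)) (e i)}

/-- `σ_max` of the oriented cycle listed by `e`. -/
noncomputable def sigmaMax {V : Type*} [Fintype V] (A : V → V → Prop)
    (e : ZMod (Fintype.card V) ≃ V) : ℕ :=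
  max (sigmaPlus A e) (sigmaMinus A e)

open Classical in
/-- number of forward arcs along the path `a :: l`. -/
noncomputable def pcount {V : Type*} (A : V → V → Prop) : V → List V → ℕ
  | _, [] => 0
  | a, b :: l => (if A a b then 1 else 0) + pcount A b l

/-- underlying adjacency -/
def uadj {V : Type*} (A : V → V → Prop) (a b : V) : Prop := A a b ∨ A b a

/-- the interleaved path (without its first vertex `w s`). -/
def tpath {V : Type*} {m : ℕ} (w : ZMod m → V) (x : V) : ℕ → List V → ZMod m → List V
  | 0, _, _ => [x]
  | k + 1, [], s => w (s + 1) :: tpath w x k [] (s + 1)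
  | k + 1, z :: zs, s => z :: w (s + 1) :: tpath w x k zs (s + 1)

open Classical in
lemma pcount_eq {V : Type*} (A : V → V → Prop) (l : List V) : ∀ (a : V) (g : ℕ → V),
    (∀ i (h : i < (a :: l).length), g i = (a :: l)[i]) →
    pcount A a l = ((Finset.range l.length).filter (fun i => A (g i) (g (i+1)))).card := by
  induction l with
  | nil => intro a g _; simp [pcount]
  | cons b l ih =>
    intro a g hg
    have h0 : g 0 = a := hg 0 (by simp)
    have h1 : g 1 = b := hg 1 (by simp)
    rw [pcount, ih b (fun i => g (i+1)) (fun i h => by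
      have := hg (i+1) (by simpa using h)
      simpa using this)]
    rw [Finset.card_filter, Finset.card_filter, List.length_cons, Finset.sum_range_succ']
    simp only [zero_add, h0, h1]
    ring

open Classical in
lemma list_to_equiv {V : Type*} [Fintype V] (A : V → V → Prop) (v : V) (l : List V)
    (hlen : l.length + 1 = Fintype.card V) (hmem : ∀ a, a ∈ v :: l)
    (hch : List.IsChain (uadj A) (v :: (l ++ [v]))) (h2 : 1 < Fintype.card V) :
    ∃ e : ZMod (Fintype.card V) ≃ V, IsHamOrientedCycle A e ∧
      sigmaPlus A e = pcount A v (l ++ [v]) := by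
  set n := Fintype.card V with hn
  have : NeZero n := ⟨by omega⟩
  have : Fact (1 < n) := ⟨h2⟩
  have hMlen : (v :: (l ++ [v])).length = n + 1 := by simp; omega
  let g : ℕ → V := fun i => if h : i < (v :: (l ++ [v])).length then (v :: (l ++ [v]))[i] else v
  have hg : ∀ i (h : i < (v :: (l ++ [v])).length), g i = (v :: (l ++ [v]))[i] := by
    intro i h; simp only [g]; rw [dif_pos h]
  have hgn : g n = v := by
    rw [hg n (by omega)]
    have : n = l.length + 1 := by omega
    simp [this]
  have hg0 : g 0 = v := by rw [hg 0 (by omega)]; simp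
  let f : ZMod n → V := fun i => g i.val
  have hf1 : ∀ i : ZMod n, f (i+1) = g (i.val + 1) := by
    intro i
    simp only [f]
    rw [ZMod.val_add, ZMod.val_one]
    have := ZMod.val_lt i
    by_cases h : i.val + 1 = n
    · rw [h, Nat.mod_self, hg0, hgn]
    · rw [Nat.mod_eq_of_lt (by omega)]
  have hsurj : Function.Surjective f := by
    intro a
    obtain ⟨i, hi, h⟩ := List.getElem_of_mem (hmem a)
    have hi' : i < n := by simp at hi; omega
    refine ⟨(i : ZMod n), ?_⟩
    simp only [f]
    rw [ZMod.val_natCast, Nat.mod_eq_of_lt hi', hg i (by omega), ← h]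
    have : v :: (l ++ [v]) = (v :: l) ++ [v] := by simp
    simp only [this]
    rw [List.getElem_append_left]
  have hbij : Function.Bijective f :=
    (Fintype.bijective_iff_surjective_and_card f).2 ⟨hsurj, ZMod.card n⟩
  refine ⟨Equiv.ofBijective f hbij, ?_, ?_⟩
  · intro i
    have hi := ZMod.val_lt i
    have := List.isChain_iff_getElem.1 hch i.val (by omega)
    simp only [Equiv.ofBijective_apply]
    rw [hf1]
    simp only [f]
    rw [hg _ (by omega), hg _ (by omega)]
    exact this
  · rw [pcount_eq A _ v g hg]
    have hl : (l ++ [v]).length = n := by simp; omega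
    rw [hl]
    unfold sigmaPlus
    rw [Nat.card_eq_fintype_card, Fintype.card_subtype]
    apply Finset.card_bij (fun (i : ZMod n) _ => i.val)
    · intro i hi
      simp only [Finset.mem_filter, Finset.mem_univ, true_and, Equiv.ofBijective_apply, hf1] at hi
      simp only [Finset.mem_filter, Finset.mem_range]
      exact ⟨ZMod.val_lt i, hi⟩
    · intro i _ j _ h
      exact ZMod.val_injective n h
    · intro j hj
      simp only [Finset.mem_filter, Finset.mem_range] at hj
      have hv : ((j : ZMod n)).val = j := by rw [ZMod.val_natCast, Nat.mod_eq_of_lt hj.1]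
      refine ⟨(j : ZMod n), ?_, hv⟩
      simp only [Finset.mem_filter, Finset.mem_univ, true_and, Equiv.ofBijective_apply, hf1]
      simp only [f, hv]
      exact hj.2

lemma tpath_length {V : Type*} {m : ℕ} (w : ZMod m → V) (x : V) : ∀ (k : ℕ) (zs : List V)
    (s : ZMod m), zs.length ≤ k → (tpath w x k zs s).length = k + zs.length + 1
  | 0, zs, s, h => by simp at h; subst h; simp [tpath]
  | k + 1, [], s, h => by simp [tpath, tpath_length w x k [] (s+1)]
  | k + 1, z :: zs, s, h => by
    simp at h
    simp [tpath, tpath_length w x k zs (s+1) h]; omega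

lemma tpath_mem_x {V : Type*} {m : ℕ} (w : ZMod m → V) (x : V) : ∀ (k : ℕ) (zs : List V)
    (s : ZMod m), x ∈ tpath w x k zs s
  | 0, zs, s => by simp [tpath]
  | k + 1, [], s => by simp [tpath, tpath_mem_x w x k [] (s+1)]
  | k + 1, z :: zs, s => by simp [tpath, tpath_mem_x w x k zs (s+1)]

lemma tpath_mem_z {V : Type*} {m : ℕ} (w : ZMod m → V) (x a : V) : ∀ (k : ℕ) (zs : List V)
    (s : ZMod m), zs.length ≤ k → a ∈ zs → a ∈ tpath w x k zs s
  | 0, zs, s, h, ha => by simp at h; subst h; simp at ha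
  | k + 1, [], s, h, ha => by simp at ha
  | k + 1, z :: zs, s, h, ha => by
    simp at h
    rcases List.mem_cons.1 ha with rfl | ha
    · simp [tpath]
    · simp [tpath, tpath_mem_z w x a k zs (s+1) h ha]

lemma tpath_mem_w {V : Type*} {m : ℕ} (w : ZMod m → V) (x : V) : ∀ (k : ℕ) (zs : List V)
    (s : ZMod m) (i : ℕ), i ≤ k → w (s + i) ∈ w s :: tpath w x k zs s
  | 0, zs, s, i, h => by
    obtain rfl : i = 0 := by omega
    simp
  | k + 1, zs, s, 0, h => by simp
  | k + 1, [], s, i + 1, h => by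
    have := tpath_mem_w w x k [] (s+1) i (by omega)
    have e : s + ((i + 1 : ℕ) : ZMod m) = s + 1 + i := by push_cast; ring
    rw [e, tpath]
    exact List.mem_cons_of_mem _ this
  | k + 1, z :: zs, s, i + 1, h => by
    have := tpath_mem_w w x k zs (s+1) i (by omega)
    have e : s + ((i + 1 : ℕ) : ZMod m) = s + 1 + i := by push_cast; ring
    rw [e, tpath]
    exact List.mem_cons_of_mem _ (List.mem_cons_of_mem _ this)

lemma tpath_chain {V : Type*} {m : ℕ} (A : V → V → Prop) (w : ZMod m → V) (x v : V)
    (hw : ∀ s, uadj A (w s) (w (s+1))) (hx : ∀ s, uadj A (w s) x) (hxv : uadj A x v) :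
    ∀ (k : ℕ) (zs : List V) (s : ZMod m), (∀ z ∈ zs, ∀ s, uadj A (w s) z) →
    List.IsChain (uadj A) (w s :: (tpath w x k zs s ++ [v]))
  | 0, zs, s, h => by simp [tpath, hx, hxv]
  | k + 1, [], s, h => by
    have := tpath_chain A w x v hw hx hxv k [] (s+1) h
    simp only [tpath, List.cons_append]
    exact List.IsChain.cons_cons (hw s) this
  | k + 1, z :: zs, s, h => by
    have := tpath_chain A w x v hw hx hxv k zs (s+1) (fun z hz => h z (List.mem_cons_of_mem _ hz))
    simp only [tpath, List.cons_append]
    exact List.IsChain.cons_cons (h z (by simp) s)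
      (List.IsChain.cons_cons (h z (by simp) (s+1)).symm this)

open Classical in
lemma tpath_sum {V : Type*} {m : ℕ} [NeZero m] (A : V → V → Prop) (hA : IsOriented A)
    (w : ZMod m → V) (x v : V)
    (hw : m - 1 ≤ ∑ s, if A (w s) (w (s+1)) then 1 else 0) :
    ∀ (k : ℕ) (zs : List V), zs.length ≤ k → (∀ z ∈ zs, ∀ s, uadj A (w s) z) →
    zs.length * m + (k - zs.length) * (m - 1) + (∑ s, if A (w s) x then 1 else 0)
      + m * (if A x v then 1 else 0) ≤ ∑ s, pcount A (w s) (tpath w x k zs s ++ [v])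
  | 0, zs, h, h' => by
    simp at h; subst h
    simp [tpath, pcount, Finset.sum_add_distrib, ZMod.card]
  | k + 1, [], h, h' => by
    have ih := tpath_sum A hA w x v hw k [] (by simp) h'
    have e := Equiv.sum_comp (Equiv.addRight (1 : ZMod m))
      (fun s => pcount A (w s) (tpath w x k [] s ++ [v]))
    simp only [Equiv.coe_addRight] at e
    simp only [tpath, List.cons_append, pcount, Finset.sum_add_distrib, e]
    simp only [List.length_nil, Nat.sub_zero] at ih ⊢
    have : (k + 1) * (m - 1) = k * (m-1) + (m-1) := by ring
    omega
  | k + 1, z :: zs, h, h' => by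
    simp only [List.length_cons, Nat.add_le_add_iff_right] at h
    have ih := tpath_sum A hA w x v hw k zs h (fun z hz => h' z (List.mem_cons_of_mem _ hz))
    have e := Equiv.sum_comp (Equiv.addRight (1 : ZMod m))
      (fun s => pcount A (w s) (tpath w x k zs s ++ [v]))
    have e2 : (∑ s, if A z (w (s + 1)) then 1 else 0) = ∑ s, if A z (w s) then 1 else 0 :=
      Equiv.sum_comp (Equiv.addRight (1 : ZMod m)) (fun s => if A z (w s) then 1 else 0)
    have e3 : (∑ s, if A (w s) z then 1 else 0) + (∑ s, if A z (w s) then 1 else 0) = m := by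
      rw [← Finset.sum_add_distrib]
      have : ∀ s, (if A (w s) z then 1 else 0) + (if A z (w s) then 1 else 0) = 1 := by
        intro s
        rcases h' z (by simp) s with h | h
        · simp [h, (hA _ _ h).2]
        · simp [h, (hA _ _ h).2]
      simp [this, ZMod.card]
    simp only [Equiv.coe_addRight] at e
    simp only [tpath, List.cons_append, pcount, Finset.sum_add_distrib, e, e2]
    simp only [List.length_cons, Nat.add_sub_add_right] at ih ⊢
    have : (zs.length + 1) * m = zs.length * m + m := by ring
    omega

/-- Rédei: insertion step -/
lemma redei_insert {V : Type*} (R : V → V → Prop) (a : V) : ∀ (l : List V),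
    l.IsChain R → (∀ b ∈ l, R a b ∨ R b a) →
    ∃ l' : List V, l'.Perm (a :: l) ∧ l'.IsChain R ∧
      (∀ c, l.head? = some c → l'.head? = some a ∨ l'.head? = some c)
  | [], _, _ => ⟨[a], List.Perm.refl _, by simp, by simp⟩
  | b :: l, hc, h => by
    rcases h b (by simp) with hab | hba
    · exact ⟨a :: b :: l, List.Perm.refl _, List.IsChain.cons_cons hab hc, by simp⟩
    · obtain ⟨l', hp, hc', hh⟩ := redei_insert R a l hc.tail
        (fun c hc => h c (List.mem_cons_of_mem _ hc))
      refine ⟨b :: l', (hp.cons b).trans (List.Perm.swap a b l), ?_, by simp⟩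
      rw [List.isChain_cons]
      refine ⟨?_, hc'⟩
      intro y hy
      cases l with
      | nil =>
        have := List.perm_singleton.1 hp
        subst this
        simp at hy; subst hy; exact hba
      | cons c l =>
        rcases hh c (by simp) with h1 | h1
        · rw [h1] at hy; simp at hy; subst hy; exact hba
        · rw [h1] at hy; simp at hy; subst hy
          exact (List.isChain_cons_cons.1 hc).1

lemma redei {V : Type*} (R : V → V → Prop) : ∀ (l : List V),
    l.Pairwise (fun a b => R a b ∨ R b a) → ∃ l' : List V, l'.Perm l ∧ l'.IsChain R
  | [], _ => ⟨[], List.Perm.refl _, by simp⟩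
  | a :: l, h => by
    obtain ⟨h1, h2⟩ := List.pairwise_cons.1 h
    obtain ⟨l', hp, hc⟩ := redei R l h2
    obtain ⟨l'', hp', hc', _⟩ := redei_insert R a l' hc (fun b hb => h1 b (hp.mem_iff.1 hb))
    exact ⟨l'', hp'.trans (hp.cons a), hc'⟩

open Classical in
lemma exists_w {V : Type*} (A : V → V → Prop) (W : Finset V) (m : ℕ) (hm : 1 < m)
    (hc : W.card = m) (hW : ∀ a ∈ W, ∀ b ∈ W, a ≠ b → uadj A a b) :
    ∃ w : ZMod m → V, (∀ s, w s ∈ W) ∧ (∀ a ∈ W, ∃ s, w s = a) ∧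
      (∀ s, uadj A (w s) (w (s+1))) ∧
      (∀ s : ZMod m, s.val + 1 < m → A (w s) (w (s+1))) := by
  have : NeZero m := ⟨by omega⟩
  have : Fact (1 < m) := ⟨hm⟩
  obtain ⟨l, hp, hch⟩ := redei A W.toList (by
    apply List.Nodup.pairwise_of_forall_ne W.nodup_toList
    intro a ha b hb hab
    exact hW a (by simpa using ha) b (by simpa using hb) hab)
  have hlen : l.length = m := by rw [hp.length_eq, Finset.length_toList, hc]
  have hnd : l.Nodup := hp.nodup_iff.2 W.nodup_toList
  have hml : ∀ a, a ∈ l ↔ a ∈ W := fun a => by rw [hp.mem_iff, Finset.mem_toList]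
  have hv : ∀ s : ZMod m, s.val < l.length := fun s => by rw [hlen]; exact ZMod.val_lt s
  have hin : ∀ s : ZMod m, l[s.val]'(hv s) ∈ W := fun s => (hml _).1 (List.getElem_mem _)
  refine ⟨fun s => l[s.val]'(hv s), hin, ?_, ?_, ?_⟩
  · intro a ha
    obtain ⟨i, hi, h⟩ := List.getElem_of_mem ((hml a).2 ha)
    refine ⟨(i : ZMod m), ?_⟩
    simp only [ZMod.val_natCast, Nat.mod_eq_of_lt (hlen ▸ hi), h]
  · intro s
    apply hW _ (hin s) _ (hin (s+1))
    intro h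
    have := (hnd.getElem_inj_iff).1 h
    have := ZMod.val_injective m this
    simp at this
  · intro s hs
    have h := List.isChain_iff_getElem.1 hch s.val (by omega)
    have e : (s+1).val = s.val + 1 := by
      rw [ZMod.val_add, ZMod.val_one, Nat.mod_eq_of_lt hs]
    simp only [e]
    exact h

theorem stmt3 {V : Type*} [Fintype V] (A : V → V → Prop) (hA : IsOriented A)
    (δ : ℕ) (hδmin : ∀ v, δ ≤ deg A v) (hδex : ∃ v, deg A v = δ)
    (hδ1 : 1 < δ) (hδ2 : 2 * δ < Fintype.card V)
    (hsum : ∀ u v : V, u ≠ v → ¬ A u v → ¬ A v u →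
      Fintype.card V + δ - 2 ≤ deg A u + deg A v) :
    ∃ e : ZMod (Fintype.card V) ≃ V, IsHamOrientedCycle A e ∧
      Fintype.card V - δ ≤ sigmaMax A e := by
  classical
  obtain ⟨v, hv⟩ := hδex
  have hdeg : ∀ u, deg A u = (Finset.univ.filter (fun t => uadj A u t)).card := by
    intro u
    have h : deg A u = Nat.card {t : V // uadj A u t} := rfl
    rw [h, Nat.card_eq_fintype_card, Fintype.card_subtype]
  have hirr : ∀ u, ¬ A u u := fun u h => (hA u u h).1 rfl
  set N := Finset.univ.filter (fun t => uadj A v t) with hN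
  have hNc : N.card = δ := by rw [← hdeg, hv]
  have hNmem : ∀ t, t ∈ N ↔ uadj A v t := fun t => by simp [hN]
  have hvN : v ∉ N := by rw [hNmem]; simp [uadj, hirr]
  set W := (insert v N)ᶜ with hW
  obtain ⟨m, hm⟩ : ∃ m, m = Fintype.card V - (δ + 1) := ⟨_, rfl⟩
  have hWc : W.card = m := by
    rw [hW, Finset.card_compl, Finset.card_insert_of_notMem hvN, hNc, hm]
  have hm1 : 1 < m := by omega
  have : NeZero m := ⟨by omega⟩
  have hWadj : ∀ a ∈ W, ∀ b, b ≠ a → b ≠ v → uadj A a b := by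
    intro a ha b hba hbv
    simp only [hW, hNmem, Finset.mem_compl, Finset.mem_insert, not_or, uadj] at ha
    obtain ⟨hav, h1, h2⟩ := ha
    have h := hsum a v hav h2 h1
    rw [hv, hdeg] at h
    have hsub : Finset.univ.filter (fun t => uadj A a t) ⊆ ({a, v} : Finset V)ᶜ := by
      intro t ht
      simp only [Finset.mem_filter, Finset.mem_univ, true_and] at ht
      unfold uadj at ht
      simp only [Finset.mem_compl, Finset.mem_insert, Finset.mem_singleton, not_or]
      constructor
      · rintro rfl; simp [hirr] at ht
      · rintro rfl; tauto
    have heq := Finset.eq_of_subset_of_card_le hsub (by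
      rw [Finset.card_compl, Finset.card_pair hav]; omega)
    have : b ∈ ({a, v} : Finset V)ᶜ := by simp [hba, hbv]
    rw [← heq] at this
    simpa using this
  have hWv : ∀ a ∈ W, a ≠ v := by
    rintro a ha rfl; simp [hW] at ha
  have hWN : ∀ a ∈ W, ∀ b ∈ N, uadj A a b := by
    intro a ha b hb
    apply hWadj a ha
    · rintro rfl; simp [hW, hb] at ha
    · rintro rfl; exact hvN hb
  obtain ⟨w, hwW, hwsurj, hwadj, hwA⟩ := exists_w A W m hm1 hWc
    (fun a ha b hb hab => hWadj a ha b hab.symm (hWv b hb))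
  have hwsum : m - 1 ≤ ∑ s, if A (w s) (w (s+1)) then 1 else 0 := by
    rw [← Finset.card_filter]
    have hsub : Finset.univ.erase (((m - 1 : ℕ) : ZMod m)) ⊆
        Finset.univ.filter (fun s => A (w s) (w (s+1))) := by
      intro s hs
      simp only [Finset.mem_erase, Finset.mem_univ, and_true] at hs
      simp only [Finset.mem_filter, Finset.mem_univ, true_and]
      apply hwA
      have := ZMod.val_lt s
      by_contra hcon
      apply hs
      have : s.val = m - 1 := by omega
      rw [← this, ZMod.natCast_zmod_val]
    have := Finset.card_le_card hsub
    rw [Finset.card_erase_of_mem (Finset.mem_univ _), Finset.card_univ, ZMod.card] at this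
    exact this
  -- the list of neighbours
  have key : ∀ x y zs, (∀ a, a ∈ x :: y :: zs ↔ a ∈ N) → zs.length + 2 = δ →
      2 * m ≤ m * ((if A v y then 1 else 0) + (if A x v then 1 else 0)) +
        ((∑ s, if A y (w s) then 1 else 0) + (∑ s, if A (w s) x then 1 else 0)) →
      ∃ e : ZMod (Fintype.card V) ≃ V, IsHamOrientedCycle A e ∧
        Fintype.card V - δ ≤ sigmaMax A e := by
    intro x y zs hmem hlen hbig
    have hxN : x ∈ N := (hmem x).1 (by simp)
    have hyN : y ∈ N := (hmem y).1 (by simp)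
    have hzN : ∀ z ∈ zs, z ∈ N := fun z hz => (hmem z).1 (by simp [hz])
    have hS := tpath_sum A hA w x v hwsum (m-1) zs (by omega)
      (fun z hz s => hWN _ (hwW s) z (hzN z hz))
    have htot : m * m < ∑ s, pcount A v ((y :: w s :: tpath w x (m-1) zs s) ++ [v]) := by
      simp only [List.cons_append, pcount, Finset.sum_add_distrib, Finset.sum_const,
        Finset.card_univ, ZMod.card, smul_eq_mul]
      rw [mul_add] at hbig
      obtain ⟨p, hp⟩ : ∃ p, m = zs.length + 1 + p := ⟨m - (zs.length + 1), by omega⟩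
      have e1 : m - 1 - zs.length = p := by omega
      have e2 : m - 1 = zs.length + p := by omega
      rw [e1, e2] at hS
      have e3 : m * m + zs.length + 1 = zs.length * m + p * (zs.length + p) + 2 * m := by
        rw [hp]; ring
      rw [e2]
      omega
    obtain ⟨s, hs⟩ : ∃ s, m < pcount A v ((y :: w s :: tpath w x (m-1) zs s) ++ [v]) := by
      by_contra hcon
      push Not at hcon
      have := Finset.sum_le_sum (s := Finset.univ) (fun s _ => hcon s)
      simp only [Finset.sum_const, Finset.card_univ, ZMod.card, smul_eq_mul] at this
      omega
    obtain ⟨e, he1, he2⟩ := list_to_equiv A v (y :: w s :: tpath w x (m-1) zs s)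
      (by simp only [List.length_cons]; rw [tpath_length _ _ _ _ _ (by omega)]; omega)
      (by
        intro a
        by_cases hav : a = v
        · simp [hav]
        by_cases haN : a ∈ N
        · rcases List.mem_cons.1 ((hmem a).2 haN) with rfl | h
          · simp [tpath_mem_x]
          rcases List.mem_cons.1 h with rfl | h
          · simp
          · simp [tpath_mem_z w x a (m-1) zs s (by omega) h]
        · have haW : a ∈ W := by simp [hW, hav, haN]
          obtain ⟨t, rfl⟩ := hwsurj a haW
          have := tpath_mem_w w x (m-1) zs s (t - s).val (by
            have := ZMod.val_lt (t - s); omega)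
          rw [ZMod.natCast_zmod_val, add_sub_cancel] at this
          exact List.mem_cons_of_mem _ (List.mem_cons_of_mem _ this))
      (by
        simp only [List.cons_append]
        refine List.IsChain.cons_cons ?_ (List.IsChain.cons_cons ?_
          (tpath_chain A w x v hwadj (fun s => hWN _ (hwW s) x hxN) ?_ (m-1) zs s
            (fun z hz s => hWN _ (hwW s) z (hzN z hz))))
        · simpa [hN] using hyN
        · exact (hWN _ (hwW s) y hyN).symm
        · have : uadj A v x := by simpa [hN] using hxN
          exact this.symm)
      (by omega)
    refine ⟨e, he1, le_trans ?_ (le_max_left _ _)⟩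
    rw [he2]
    omega
  have hdegW : ∀ z ∈ N, (∑ s, if A (w s) z then 1 else 0) +
      (∑ s, if A z (w s) then 1 else 0) = m := by
    intro z hz
    rw [← Finset.sum_add_distrib]
    have : ∀ s, (if A (w s) z then 1 else 0) + (if A z (w s) then 1 else 0) = 1 := by
      intro s
      rcases hWN _ (hwW s) z hz with h | h
      · simp [h, (hA _ _ h).2]
      · simp [h, (hA _ _ h).2]
    simp [this, ZMod.card]
  have hvz : ∀ z ∈ N, (if A v z then 1 else 0) + (if A z v then 1 else 0) = 1 := by
    intro z hz
    have : uadj A v z := by simpa [hN] using hz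
    rcases this with h | h
    · simp [h, (hA _ _ h).2]
    · simp [h, (hA _ _ h).2]
  have hNl : N.toList.length = δ := by rw [Finset.length_toList, hNc]
  have hNm : ∀ a, a ∈ N.toList ↔ a ∈ N := fun a => Finset.mem_toList
  generalize N.toList = L at hNl hNm
  match L, hNl, hNm with
  | [], h, _ => simp at h; omega
  | [_], h, _ => simp at h; omega
  | x :: y :: zs, h, hmem =>
    have hx := (hmem x).1 (by simp)
    have hy := (hmem y).1 (by simp)
    have h1 := hdegW x hx
    have h2 := hdegW y hy
    have h3 := congrArg (m * ·) (hvz x hx)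
    have h4 := congrArg (m * ·) (hvz y hy)
    simp only [mul_add, mul_one] at h3 h4
    by_cases hh : 2 * m ≤ m * ((if A v y then 1 else 0) + (if A x v then 1 else 0)) +
        ((∑ s, if A y (w s) then 1 else 0) + (∑ s, if A (w s) x then 1 else 0))
    · exact key x y zs hmem (by simpa using h) hh
    · apply key y x zs
        (fun a => by rw [← hmem a]; simp only [List.mem_cons]; tauto) (by simpa using h)
      rw [mul_add] at hh ⊢
      omega
end

section
/- Let k ≥ 0 and let D be an oriented graph on n ≥ 30 + 4(k−1) vertices with s*(D) ≥ 8k. Then D contains a Hamilton oriented cycle C with σ_max(C) ≥ ⌈(n+k)/2⌉. -/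
open Classical in
/-- `s*(D)`: the minimum of `d(u)+d(v)-n` over pairs of distinct non-adjacent vertices,
or `n-2` if there are no such pairs (i.e. `D` is a tournament). -/
noncomputable def sStar {V : Type*} [Fintype V] (A : V → V → Prop) : ℤ :=
  if (∃ u v : V, u ≠ v ∧ ¬ A u v ∧ ¬ A v u) then
    sInf {z : ℤ | ∃ u v : V, u ≠ v ∧ ¬ A u v ∧ ¬ A v u ∧
      z = (deg A u : ℤ) + (deg A v : ℤ) - (Fintype.card V : ℤ)}
  else (Fintype.card V : ℤ) - 2

namespace HamDisc

/-- Indicator of a proposition. -/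
noncomputable def ind (p : Prop) : ℕ := open Classical in if p then 1 else 0

lemma ind_pos {p : Prop} (h : p) : ind p = 1 := by simp [ind, h]
lemma ind_neg {p : Prop} (h : ¬ p) : ind p = 0 := by simp [ind, h]
lemma ind_le (p : Prop) : ind p ≤ 1 := by unfold ind; split_ifs <;> omega

/-- Number of consecutive pairs of the list satisfying `R`. -/
noncomputable def pc {α : Type*} (R : α → α → Prop) : List α → ℕ
  | [] => 0
  | [_] => 0
  | x :: y :: l => ind (R x y) + pc R (y :: l)

/-- Contribution of a junction. -/
noncomputable def jn {α : Type*} (R : α → α → Prop) : Option α → Option α → ℕ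
  | some x, some y => ind (R x y)
  | _, _ => 0

/-- Number of cyclically consecutive pairs of the list satisfying `R`. -/
noncomputable def cc {α : Type*} (R : α → α → Prop) (l : List α) : ℕ :=
  pc R l + jn R l.getLast? l.head?

lemma jn_none {α : Type*} (R : α → α → Prop) (o : Option α) : jn R o none = 0 := by
  cases o <;> rfl

lemma pc_cons {α : Type*} (R : α → α → Prop) (x : α) (l : List α) :
    pc R (x :: l) = jn R (some x) l.head? + pc R l := by
  cases l <;> simp [pc, jn]

lemma pc_append {α : Type*} (R : α → α → Prop) (X Y : List α) :
    pc R (X ++ Y) = pc R X + jn R X.getLast? Y.head? + pc R Y := by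
  induction X with
  | nil => cases Y <;> simp [pc, jn]
  | cons x X ih =>
    cases X with
    | nil => simp [pc_cons, pc, jn_none]
    | cons y X =>
      rw [List.cons_append, pc_cons, ih, pc_cons R x (y :: X)]
      simp only [List.cons_append, List.head?_cons, List.getLast?_cons_cons]
      omega

lemma pc_reverse {α : Type*} (R : α → α → Prop) (X : List α) :
    pc R X.reverse = pc (fun a b => R b a) X := by
  induction X with
  | nil => simp [pc]
  | cons x X ih =>
    rw [List.reverse_cons, pc_append, ih, pc_cons]
    cases X with
    | nil => simp [pc, jn]
    | cons y X => simp [pc, jn]; omega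

lemma pc_map {α β : Type*} (R : β → β → Prop) (f : α → β) (X : List α) :
    pc R (X.map f) = pc (fun a b => R (f a) (f b)) X := by
  induction X with
  | nil => simp [pc]
  | cons x X ih =>
    rw [List.map_cons, pc_cons, ih, pc_cons]
    cases X <;> simp [jn]

lemma pc_split {α : Type*} (R : α → α → Prop) (L : List α) (h : 0 < pc R L) :
    ∃ X Y a b, L = X ++ Y ∧ X.getLast? = some a ∧ Y.head? = some b ∧ R a b := by
  induction L with
  | nil => simp [pc] at h
  | cons x L ih =>
    cases L with
    | nil => simp [pc] at h
    | cons y L =>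
      by_cases hR : R x y
      · exact ⟨[x], y :: L, x, y, by simp, by simp, by simp, hR⟩
      · rw [pc, ind_neg hR, zero_add] at h
        obtain ⟨X, Y, a, b, h1, h2, h3, h4⟩ := ih h
        refine ⟨x :: X, Y, a, b, by simp [h1], ?_, h3, h4⟩
        cases X with
        | nil => simp at h2
        | cons u X => simpa using h2

lemma cc_rotate {α : Type*} (R : α → α → Prop) (X Y : List α) :
    cc R (X ++ Y) = cc R (Y ++ X) := by
  cases X with
  | nil => simp
  | cons x X =>
    cases Y with
    | nil => simp
    | cons y Y =>
      unfold cc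
      rw [pc_append, pc_append]
      simp only [List.getLast?_append, List.head?_append, List.head?_cons, Option.some_or,
        List.getLast?_cons]
      omega

lemma pigeon {α : Type*} (f g : α → Prop) (L : List α) (x z : α) (hx : L.head? = some x)
    (hz : L.getLast? = some z) :
    (L.map (fun w => ind (f w))).sum + (L.map (fun w => ind (g w))).sum + 1 ≤
      pc (fun a b => g a ∧ f b) L + L.length + ind (f x) + ind (g z) := by
  induction L generalizing x with
  | nil => simp at hx
  | cons w L ih =>
    cases L with
    | nil =>
      simp at hx hz
      subst hx; subst hz
      simp [pc]
    | cons y L =>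
      have := ih y (by simp) (by simpa using hz)
      simp at hx
      subst hx
      have h2 : ind (g w) + ind (f y) ≤ ind (g w ∧ f y) + 1 := by
        unfold ind; split_ifs <;> simp_all
      simp only [List.map_cons, List.sum_cons, List.length_cons, pc] at *
      omega

/-- Blocks: single vertices, or four vertices to be traversed consecutively. -/
inductive Blk (V : Type*) where
  | one (v : V) : Blk V
  | four (a b c d : V) : Blk V

variable {V : Type*}

def Blk.toL : Blk V → List V
  | .one v => [v]
  | .four a b c d => [a, b, c, d]

def Blk.fst : Blk V → V
  | .one v => v
  | .four a _ _ _ => a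

def Blk.lst : Blk V → V
  | .one v => v
  | .four _ _ _ d => d

def Blk.rev : Blk V → Blk V
  | .one v => .one v
  | .four a b c d => .four d c b a

def Blk.swp : Blk V → Blk V
  | .one v => .one v
  | .four a b c d => .four a c b d

def Blk.gad : Blk V → ℕ
  | .one _ => 0
  | .four _ _ _ _ => 1

/-- Adjacency. -/
def Adj (A : V → V → Prop) (u v : V) : Prop := A u v ∨ A v u

lemma Adj.symm {A : V → V → Prop} {u v : V} (h : Adj A u v) : Adj A v u := Or.symm h

lemma Adj.comm {A : V → V → Prop} {u v : V} : Adj A u v ↔ Adj A v u := ⟨Or.symm, Or.symm⟩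

/-- Gadget condition. -/
def Blk.ok (A : V → V → Prop) : Blk V → Prop
  | .one _ => True
  | .four a b c d => Adj A a b ∧ Adj A b c ∧ Adj A c d ∧ Adj A a c ∧ Adj A b d ∧
      pc A [a, b, c, d] ≠ pc A [a, c, b, d]

open Classical in
noncomputable def Blk.hi (A : V → V → Prop) (w : Blk V) : Blk V :=
  if pc A w.swp.toL ≤ pc A w.toL then w else w.swp

open Classical in
noncomputable def Blk.lo (A : V → V → Prop) (w : Blk V) : Blk V :=
  if pc A w.swp.toL ≤ pc A w.toL then w.swp else w

lemma ind_adj {A : V → V → Prop} (hA : IsOriented A) {u v : V} (h : Adj A u v) :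
    ind (A u v) + ind (A v u) = 1 := by
  rcases h with h | h
  · rw [ind_pos h, ind_neg (hA _ _ h).2]
  · rw [ind_pos h, ind_neg (hA _ _ h).2]

lemma ok_rev {A : V → V → Prop} (hA : IsOriented A) (w : Blk V) (h : w.ok A) : w.rev.ok A := by
  cases w with
  | one v => trivial
  | four a b c d =>
    obtain ⟨h1, h2, h3, h4, h5, h6⟩ := h
    refine ⟨h3.symm, h2.symm, h1.symm, h5.symm, h4.symm, ?_⟩
    have := ind_adj hA h1
    have := ind_adj hA h2
    have := ind_adj hA h3
    have := ind_adj hA h4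
    have := ind_adj hA h5
    simp only [pc] at *
    omega

lemma ends_swp (w : Blk V) : w.swp.fst = w.fst ∧ w.swp.lst = w.lst := by
  cases w <;> exact ⟨rfl, rfl⟩

lemma ends_hi (A : V → V → Prop) (w : Blk V) : (w.hi A).fst = w.fst ∧ (w.hi A).lst = w.lst := by
  unfold Blk.hi; split_ifs
  · exact ⟨rfl, rfl⟩
  · exact ends_swp w

lemma ends_lo (A : V → V → Prop) (w : Blk V) : (w.lo A).fst = w.fst ∧ (w.lo A).lst = w.lst := by
  unfold Blk.lo; split_ifs
  · exact ends_swp w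
  · exact ⟨rfl, rfl⟩

lemma perm_swp (w : Blk V) : w.swp.toL.Perm w.toL := by
  cases w with
  | one v => exact List.Perm.refl _
  | four a b c d => exact List.Perm.cons _ (List.Perm.swap _ _ _)

lemma perm_hi (A : V → V → Prop) (w : Blk V) : (w.hi A).toL.Perm w.toL := by
  unfold Blk.hi; split_ifs
  · exact List.Perm.refl _
  · exact perm_swp w

lemma perm_lo (A : V → V → Prop) (w : Blk V) : (w.lo A).toL.Perm w.toL := by
  unfold Blk.lo; split_ifs
  · exact perm_swp w
  · exact List.Perm.refl _

lemma hi_lo (A : V → V → Prop) (w : Blk V) (h : w.ok A) :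
    pc A (w.lo A).toL + w.gad ≤ pc A (w.hi A).toL := by
  unfold Blk.hi Blk.lo
  cases w with
  | one v => simp [Blk.swp, Blk.gad]
  | four a b c d =>
    have := h.2.2.2.2.2
    split_ifs with hle <;> simp only [Blk.swp, Blk.toL, Blk.gad] at * <;> omega

lemma bad_self (A : V → V → Prop) (w : Blk V) (h : w.ok A) :
    pc (fun u v => ¬ Adj A u v) w.toL = 0 ∧ pc (fun u v => ¬ Adj A u v) w.swp.toL = 0 := by
  cases w with
  | one v => simp [Blk.swp, Blk.toL, pc]
  | four a b c d =>
    obtain ⟨h1, h2, h3, h4, h5, h6⟩ := h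
    have h2' := h2.symm
    simp [Blk.swp, Blk.toL, pc, ind, *]

lemma bad_hi (A : V → V → Prop) (w : Blk V) (h : w.ok A) :
    pc (fun u v => ¬ Adj A u v) (w.hi A).toL = 0 := by
  unfold Blk.hi; split_ifs
  · exact (bad_self A w h).1
  · exact (bad_self A w h).2

lemma bad_lo (A : V → V → Prop) (w : Blk V) (h : w.ok A) :
    pc (fun u v => ¬ Adj A u v) (w.lo A).toL = 0 := by
  unfold Blk.lo; split_ifs
  · exact (bad_self A w h).2
  · exact (bad_self A w h).1

lemma toL_head (w : Blk V) : w.toL.head? = some w.fst := by cases w <;> rfl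
lemma toL_last (w : Blk V) : w.toL.getLast? = some w.lst := by cases w <;> rfl
lemma rev_fst (w : Blk V) : w.rev.fst = w.lst := by cases w <;> rfl
lemma rev_lst (w : Blk V) : w.rev.lst = w.fst := by cases w <;> rfl
lemma rev_gad (w : Blk V) : w.rev.gad = w.gad := by cases w <;> rfl
lemma toL_rev (w : Blk V) : w.rev.toL = w.toL.reverse := by cases w <;> rfl

lemma flat_head (L : List (Blk V)) : (L.flatMap Blk.toL).head? = L.head?.map Blk.fst := by
  cases L with
  | nil => rfl
  | cons w L => simp [List.flatMap_cons, List.head?_append, toL_head]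

lemma flat_last (L : List (Blk V)) : (L.flatMap Blk.toL).getLast? = L.getLast?.map Blk.lst := by
  induction L with
  | nil => rfl
  | cons w L ih =>
    rw [List.flatMap_cons, List.getLast?_append, ih, toL_last]
    cases L with
    | nil => rfl
    | cons y L => simp [List.getLast?_cons]

lemma pc_flat (S : V → V → Prop) (L : List (Blk V)) :
    pc S (L.flatMap Blk.toL) =
      (L.map (fun w => pc S w.toL)).sum + pc (fun a b => S a.lst b.fst) L := by
  induction L with
  | nil => simp [pc]
  | cons w L ih =>
    rw [List.flatMap_cons, pc_append, ih, flat_head, toL_last, pc_cons]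
    cases L with
    | nil => simp [pc, jn]
    | cons y L => simp [jn]; omega

lemma cc_flat (S : V → V → Prop) (L : List (Blk V)) :
    cc S (L.flatMap Blk.toL) =
      (L.map (fun w => pc S w.toL)).sum + cc (fun a b => S a.lst b.fst) L := by
  unfold cc
  rw [pc_flat, flat_head, flat_last]
  cases h1 : L.head? <;> cases h2 : L.getLast? <;> simp [jn] <;> omega

lemma cc_flat_map (S : V → V → Prop) (h : Blk V → Blk V)
    (hh : ∀ w, (h w).fst = w.fst ∧ (h w).lst = w.lst) (L : List (Blk V)) :
    cc S ((L.map h).flatMap Blk.toL) =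
      (L.map (fun w => pc S (h w).toL)).sum + cc (fun a b => S a.lst b.fst) L := by
  rw [cc_flat, List.map_map]
  congr 1
  unfold cc
  rw [pc_map]
  simp only [hh]
  congr 1
  rw [List.getLast?_map, List.head?_map]
  cases h1 : L.head? <;> cases h2 : L.getLast? <;> simp [jn, hh]

def revL (L : List (Blk V)) : List (Blk V) := (L.map Blk.rev).reverse

lemma perm_revL (L : List (Blk V)) :
    ((revL L).flatMap Blk.toL).Perm (L.flatMap Blk.toL) := by
  have : ((revL L).flatMap Blk.toL) = (L.flatMap Blk.toL).reverse := by
    induction L with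
    | nil => rfl
    | cons w L ih =>
      rw [List.flatMap_cons, List.reverse_append, ← ih]
      simp [revL, toL_rev]
  rw [this]
  exact List.reverse_perm _

/-- Admissible block arrangements. -/
structure Good [Fintype V] (A : V → V → Prop) (k : ℕ) (L : List (Blk V)) : Prop where
  perm : (L.flatMap Blk.toL).Perm Finset.univ.toList
  ok : ∀ w ∈ L, w.ok A
  gad : (L.map Blk.gad).sum = k

lemma Good.rotate [Fintype V] {A : V → V → Prop} {k : ℕ} {X Y : List (Blk V)}
    (h : Good A k (X ++ Y)) : Good A k (Y ++ X) := by
  refine ⟨?_, ?_, ?_⟩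
  · refine List.Perm.trans ?_ h.perm
    rw [List.flatMap_append, List.flatMap_append]
    exact List.perm_append_comm
  · intro w hw
    apply h.ok
    simp at hw ⊢
    tauto
  · have := h.gad
    simp at this ⊢
    omega

lemma Good.exch [Fintype V] {A : V → V → Prop} (hA : IsOriented A) {k : ℕ} {X Y : List (Blk V)}
    (h : Good A k (X ++ Y)) : Good A k (X ++ revL Y) := by
  refine ⟨?_, ?_, ?_⟩
  · refine List.Perm.trans ?_ h.perm
    rw [List.flatMap_append, List.flatMap_append]
    exact List.Perm.append_left _ (perm_revL Y)
  · intro w hw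
    rw [List.mem_append] at hw
    rcases hw with hw | hw
    · exact h.ok w (by simp [hw])
    · simp [revL] at hw
      obtain ⟨u, hu, rfl⟩ := hw
      exact ok_rev hA u (h.ok u (by simp [hu]))
  · have := h.gad
    have e : (Blk.gad ∘ Blk.rev : Blk V → ℕ) = Blk.gad := funext rev_gad
    simp [revL, List.sum_reverse, e] at this ⊢
    omega

/-- Bad junctions. -/
def badB (A : V → V → Prop) (a b : Blk V) : Prop := ¬ Adj A a.lst b.fst

lemma pc_bad_revL (A : V → V → Prop) (L : List (Blk V)) :
    pc (badB A) (revL L) = pc (badB A) L := by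
  unfold revL
  rw [pc_reverse, pc_map]
  congr 1
  funext a b
  simp only [badB, rev_fst, rev_lst]
  rw [Adj.comm]

lemma sum_ind_eq [Fintype V] (A : V → V → Prop) (l : List V) (hl : l.Perm Finset.univ.toList)
    (x : V) : (l.map (fun v => ind (Adj A x v))).sum = deg A x := by
  classical
  rw [(hl.map _).sum_eq]
  rw [Finset.sum_map_toList]
  unfold deg ind
  rw [Nat.card_eq_fintype_card, Fintype.card_subtype, Finset.card_filter]
  apply Finset.sum_congr rfl
  intro v _
  unfold Adj
  congr

lemma flat_sum (f : V → ℕ) (L : List (Blk V)) :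
    ((L.flatMap Blk.toL).map f).sum = (L.map (fun w => (w.toL.map f).sum)).sum := by
  induction L with
  | nil => rfl
  | cons w L ih => simp [List.flatMap_cons, ih]

lemma deg_le [Fintype V] {A : V → V → Prop} {k : ℕ} {L : List (Blk V)} (h : Good A k L) (x : V) :
    deg A x ≤ (L.map (fun w => ind (Adj A x w.fst))).sum + 3 * k ∧
    deg A x ≤ (L.map (fun w => ind (Adj A x w.lst))).sum + 3 * k := by
  rw [← sum_ind_eq A _ h.perm x, flat_sum, ← h.gad]
  clear h
  induction L with
  | nil => simp
  | cons w L ih =>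
    have key : (w.toL.map (fun v => ind (Adj A x v))).sum ≤ ind (Adj A x w.fst) + 3 * w.gad ∧
      (w.toL.map (fun v => ind (Adj A x v))).sum ≤ ind (Adj A x w.lst) + 3 * w.gad := by
      cases w with
      | one v => simp [Blk.toL, Blk.fst, Blk.lst]
      | four a b c d =>
        have := ind_le (Adj A x a)
        have := ind_le (Adj A x b)
        have := ind_le (Adj A x c)
        have := ind_le (Adj A x d)
        simp [Blk.toL, Blk.fst, Blk.lst, Blk.gad]
        omega
    simp only [List.map_cons, List.sum_cons] at *
    omega

lemma length_eq [Fintype V] {A : V → V → Prop} {k : ℕ} {L : List (Blk V)} (h : Good A k L) :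
    L.length + 3 * k = Fintype.card V := by
  have h1 := h.perm.length_eq
  rw [Finset.length_toList, Finset.card_univ] at h1
  rw [← h1, ← h.gad]
  clear h h1
  induction L with
  | nil => rfl
  | cons w L ih =>
    have : w.toL.length = 1 + 3 * w.gad := by cases w <;> rfl
    simp only [List.map_cons, List.sum_cons, List.flatMap_cons, List.length_append,
      List.length_cons] at *
    omega

lemma ends_ne [Fintype V] {A : V → V → Prop} {k : ℕ} {L : List (Blk V)} (h : Good A k L)
    (hc : 2 ≤ Fintype.card V) {x z : Blk V} (hx : L.head? = some x) (hz : L.getLast? = some z) :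
    z.lst ≠ x.fst := by
  have nd : (L.flatMap Blk.toL).Nodup := h.perm.nodup_iff.2 (Finset.nodup_toList _)
  have hlen := h.perm.length_eq
  rw [Finset.length_toList, Finset.card_univ] at hlen
  have e1 := flat_head L
  have e2 := flat_last L
  rw [hx] at e1
  rw [hz] at e2
  generalize L.flatMap Blk.toL = l at *
  intro heq
  cases l with
  | nil => simp at e1
  | cons u l =>
    simp at e1
    cases l with
    | nil => simp at hlen; omega
    | cons v l =>
      rw [List.getLast?_cons_cons] at e2
      have := List.mem_of_getLast? e2
      rw [heq, ← e1] at this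
      exact (List.nodup_cons.1 nd).1 this

lemma improve [Fintype V] {A : V → V → Prop} (hA : IsOriented A) {k : ℕ}
    (hc : 2 ≤ Fintype.card V)
    (hO : ∀ u v, u ≠ v → ¬ Adj A u v → Fintype.card V + 8 * k ≤ deg A u + deg A v)
    {L : List (Blk V)} (h : Good A k L) (hb : 0 < cc (badB A) L) :
    ∃ L', Good A k L' ∧ cc (badB A) L' < cc (badB A) L := by
  have irr : ∀ u, ¬ Adj A u u := fun u hu => by
    rcases hu with hu | hu <;> exact (hA _ _ hu).1 rfl
  obtain ⟨L1, g1, e1, x, z, hx, hz, hxz⟩ : ∃ L1, Good A k L1 ∧ cc (badB A) L1 = cc (badB A) L ∧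
      ∃ x z, L1.head? = some x ∧ L1.getLast? = some z ∧ badB A z x := by
    by_cases hp : 0 < pc (badB A) L
    · obtain ⟨X, Y, a, b, rfl, ha, hb', hab⟩ := pc_split _ _ hp
      refine ⟨Y ++ X, h.rotate, cc_rotate _ _ _, b, a, ?_, ?_, hab⟩
      · simp [List.head?_append, hb']
      · simp [List.getLast?_append, ha]
    · refine ⟨L, h, rfl, ?_⟩
      unfold cc at hb
      cases h1 : L.head? with
      | none => rw [h1, jn_none] at hb; omega
      | some x =>
        cases h2 : L.getLast? with
        | none => rw [h1, h2] at hb; simp [jn] at hb; omega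
        | some z =>
          refine ⟨x, z, rfl, rfl, ?_⟩
          by_contra hne
          rw [h1, h2] at hb
          simp only [jn, ind_neg hne] at hb
          omega
  rw [← e1]
  have hne := ends_ne g1 hc hx hz
  have hdeg := hO _ _ hne hxz
  have d1 := (deg_le g1 x.fst).1
  have d2 := (deg_le g1 z.lst).2
  have hl := length_eq g1
  have pg := pigeon (fun w : Blk V => Adj A x.fst w.fst) (fun w => Adj A z.lst w.lst) L1 x z hx hz
  rw [ind_neg (irr _), ind_neg (irr _)] at pg
  obtain ⟨X, Y, a, b, rfl, ha, hb', hab1, hab2⟩ :=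
    pc_split (fun a b : Blk V => Adj A z.lst a.lst ∧ Adj A x.fst b.fst) L1 (by omega)
  refine ⟨X ++ revL Y, g1.exch hA, ?_⟩
  have hX : X.head? = some x := by
    cases X with
    | nil => simp at ha
    | cons u X => simpa using hx
  have hY : Y.getLast? = some z := by
    rw [List.getLast?_append] at hz
    cases hq : Y.getLast? with
    | none =>
      rw [List.getLast?_eq_none_iff] at hq
      simp [hq] at hb'
    | some q => simpa [hq] using hz
  have r1 : (revL Y).head? = some z.rev := by simp [revL, hY]
  have r2 : (revL Y).getLast? = some b.rev := by simp [revL, hb']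
  unfold cc
  rw [pc_append, pc_append, pc_bad_revL]
  rw [List.getLast?_append, List.getLast?_append, List.head?_append, List.head?_append]
  rw [r1, r2, hX, hY, ha, hb']
  simp only [Option.some_or, jn]
  have n1 : ¬ badB A a z.rev := by
    unfold badB; rw [rev_fst, not_not]; exact hab1.symm
  have n2 : ¬ badB A b.rev x := by
    unfold badB; rw [rev_lst, not_not]; exact hab2.symm
  rw [ind_neg n1, ind_neg n2, ind_pos hxz]
  omega

lemma exists_good [Fintype V] {A : V → V → Prop} (hA : IsOriented A) {k : ℕ}
    (hc : 2 ≤ Fintype.card V)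
    (hO : ∀ u v, u ≠ v → ¬ Adj A u v → Fintype.card V + 8 * k ≤ deg A u + deg A v)
    (N : ℕ) : ∀ L : List (Blk V), Good A k L → cc (badB A) L ≤ N →
    ∃ L', Good A k L' ∧ cc (badB A) L' = 0 := by
  induction N with
  | zero => exact fun L h hL => ⟨L, h, by omega⟩
  | succ N ih =>
    intro L h hL
    by_cases h0 : 0 < cc (badB A) L
    · obtain ⟨L', h', hlt⟩ := improve hA hc hO h h0
      exact ih L' h' (by omega)
    · exact ⟨L, h, by omega⟩

/-- In a dense piece there is an edge with three common neighbours. -/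
lemma dense {A : V → V → Prop} [DecidableEq V] (N : V → Finset V)
    (W : Finset V) (hN : ∀ u v, v ∈ N u ↔ v ∈ W ∧ Adj A u v)
    (hW : 9 ≤ W.card)
    (hO : ∀ u ∈ W, ∀ v ∈ W, u ≠ v → ¬ Adj A u v → W.card + 8 ≤ (N u).card + (N v).card) :
    ∃ b ∈ W, ∃ c ∈ W, Adj A b c ∧ ∃ T : Finset V, T ⊆ W ∧ 3 ≤ T.card ∧
      ∀ x ∈ T, Adj A b x ∧ Adj A c x := by
  set S := W.filter (fun v => 2 * (N v).card < W.card + 8) with hS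
  have clique : ∀ u ∈ S, ∀ v ∈ S, u ≠ v → Adj A u v := by
    intro u hu v hv huv
    simp only [hS, Finset.mem_filter] at hu hv
    by_contra hne
    have := hO u hu.1 v hv.1 huv hne
    omega
  have hSW : S ⊆ W := Finset.filter_subset _ _
  by_cases h5 : 5 ≤ S.card
  · obtain ⟨b, hb, c, hc, hbc⟩ := Finset.one_lt_card.1 (show 1 < S.card by omega)
    refine ⟨b, hSW hb, c, hSW hc, clique b hb c hc hbc, (S.erase b).erase c, ?_, ?_, ?_⟩
    · exact (Finset.erase_subset _ _).trans ((Finset.erase_subset _ _).trans hSW)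
    · rw [Finset.card_erase_of_mem (by simp [hc, hbc.symm]), Finset.card_erase_of_mem hb]
      omega
    · intro x hx
      simp only [Finset.mem_erase] at hx
      exact ⟨clique b hb x hx.2.2 (Ne.symm hx.2.1), clique c hc x hx.2.2 (Ne.symm hx.1)⟩
  · have big : ∀ v ∈ W, v ∉ S → W.card + 8 ≤ 2 * (N v).card := by
      intro v hv hvS
      by_contra hlt
      exact hvS (by simp only [hS, Finset.mem_filter]; exact ⟨hv, by omega⟩)
    obtain ⟨b, hb, hbS⟩ := Finset.exists_mem_notMem_of_card_lt_card (show S.card < W.card by omega)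
    have hb8 := big b hb hbS
    obtain ⟨c, hc, hcS⟩ :=
      Finset.exists_mem_notMem_of_card_lt_card (show S.card < (N b).card by omega)
    have hcW := ((hN b c).1 hc).1
    have hc8 := big c hcW hcS
    have hsub : N b ∪ N c ⊆ W := by
      intro v hv
      rw [Finset.mem_union] at hv
      rcases hv with hv | hv
      · exact ((hN _ _).1 hv).1
      · exact ((hN _ _).1 hv).1
    have h1 := Finset.card_le_card hsub
    have h2 := Finset.card_union_add_card_inter (N b) (N c)
    refine ⟨b, hb, c, hcW, ((hN b c).1 hc).2, N b ∩ N c, ?_, by omega, ?_⟩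
    · exact (Finset.inter_subset_left).trans (Finset.subset_union_left.trans hsub)
    · intro x hx
      rw [Finset.mem_inter] at hx
      exact ⟨((hN _ _).1 hx.1).2, ((hN _ _).1 hx.2).2⟩

lemma adj_ne {A : V → V → Prop} (hA : IsOriented A) {u v : V} (h : Adj A u v) : u ≠ v := by
  rcases h with h | h
  · exact (hA _ _ h).1
  · exact (hA _ _ h).1.symm

/-- Three common neighbours of an edge give a gadget. -/
lemma gadget {A : V → V → Prop} (hA : IsOriented A) {b c x y z : V} (hbc : Adj A b c)
    (hx : Adj A b x ∧ Adj A c x) (hy : Adj A b y ∧ Adj A c y) (hz : Adj A b z ∧ Adj A c z) :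
    (Blk.four x b c y).ok A ∨ (Blk.four x b c z).ok A ∨ (Blk.four y b c z).ok A := by
  by_contra hcon
  push Not at hcon
  obtain ⟨h1, h2, h3⟩ := hcon
  have e1 : pc A [x, b, c, y] = pc A [x, c, b, y] := by
    by_contra hne
    exact h1 ⟨hx.1.symm, hbc, hy.2, hx.2.symm, hy.1, hne⟩
  have e2 : pc A [x, b, c, z] = pc A [x, c, b, z] := by
    by_contra hne
    exact h2 ⟨hx.1.symm, hbc, hz.2, hx.2.symm, hz.1, hne⟩
  have e3 : pc A [y, b, c, z] = pc A [y, c, b, z] := by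
    by_contra hne
    exact h3 ⟨hy.1.symm, hbc, hz.2, hy.2.symm, hz.1, hne⟩
  have := ind_adj hA hbc
  have := ind_adj hA hx.1
  have := ind_adj hA hx.2
  have := ind_adj hA hy.1
  have := ind_adj hA hy.2
  have := ind_adj hA hz.1
  have := ind_adj hA hz.2
  simp only [pc] at e1 e2 e3
  omega

lemma find_gadget [Fintype V] [DecidableEq V] {A : V → V → Prop} (hA : IsOriented A) {k t : ℕ}
    (ht : t < k) (hn : 26 + 4 * k ≤ Fintype.card V)
    (hO : ∀ u v, u ≠ v → ¬ Adj A u v → Fintype.card V + 8 * k ≤ deg A u + deg A v)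
    (U : Finset V) (hU : U.card = 4 * t) :
    ∃ a b c d, a ∉ U ∧ b ∉ U ∧ c ∉ U ∧ d ∉ U ∧ [a, b, c, d].Nodup ∧ (Blk.four a b c d).ok A := by
  classical
  have hWc : Uᶜ.card + 4 * t = Fintype.card V := by
    rw [← hU, Finset.card_compl]
    have := Finset.card_le_univ U
    omega
  have hdeg : ∀ u, deg A u ≤ (Uᶜ.filter (fun v => Adj A u v)).card + 4 * t := by
    intro u
    unfold deg
    rw [Nat.card_eq_fintype_card, Fintype.card_subtype, ← hU]
    refine le_trans (Finset.card_le_card ?_) (Finset.card_union_le _ _)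
    intro v hv
    simp only [Finset.mem_filter, Finset.mem_univ, true_and, Finset.mem_union,
      Finset.mem_compl] at hv ⊢
    by_cases hvU : v ∈ U
    · exact Or.inr hvU
    · exact Or.inl ⟨hvU, hv⟩
  obtain ⟨b, hb, c, hc, hbc, T, hT, hT3, hTa⟩ :=
    dense (A := A) (fun u => Uᶜ.filter (fun v => Adj A u v)) Uᶜ (by simp) (by omega) (by
      intro u _ v _ huv hne
      have := hO u v huv hne
      have := hdeg u
      have := hdeg v
      omega)
  obtain ⟨x, hx, y, hy, z, hz, hxy, hxz, hyz⟩ := Finset.two_lt_card.1 (show 2 < T.card by omega)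
  have fin : ∀ p ∈ T, ∀ q ∈ T, p ≠ q → (Blk.four p b c q).ok A →
      ∃ a b c d, a ∉ U ∧ b ∉ U ∧ c ∉ U ∧ d ∉ U ∧ [a, b, c, d].Nodup ∧
        (Blk.four a b c d).ok A := by
    intro p hp q hq hpq hok
    refine ⟨p, b, c, q, Finset.mem_compl.1 (hT hp), Finset.mem_compl.1 hb, Finset.mem_compl.1 hc,
      Finset.mem_compl.1 (hT hq), ?_, hok⟩
    have := adj_ne hA (hTa p hp).1
    have := adj_ne hA (hTa p hp).2
    have := adj_ne hA (hTa q hq).1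
    have := adj_ne hA (hTa q hq).2
    have := adj_ne hA hbc
    simp
    tauto
  rcases gadget hA hbc (hTa x hx) (hTa y hy) (hTa z hz) with h | h | h
  · exact fin x hx y hy hxy h
  · exact fin x hx z hz hxz h
  · exact fin y hy z hz hyz h

lemma gadgets [Fintype V] {A : V → V → Prop} (hA : IsOriented A) {k : ℕ}
    (hn : 26 + 4 * k ≤ Fintype.card V)
    (hO : ∀ u v, u ≠ v → ¬ Adj A u v → Fintype.card V + 8 * k ≤ deg A u + deg A v) (t : ℕ)
    (ht : t ≤ k) :
    ∃ G : List (Blk V), (G.flatMap Blk.toL).Nodup ∧ (∀ w ∈ G, w.ok A) ∧ (G.map Blk.gad).sum = t ∧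
      (G.flatMap Blk.toL).length = 4 * t := by
  classical
  induction t with
  | zero => exact ⟨[], by simp⟩
  | succ t ih =>
    obtain ⟨G, g1, g2, g3, g4⟩ := ih (by omega)
    obtain ⟨a, b, c, d, ha, hb, hc, hd, hnd, hok⟩ :=
      find_gadget hA (show t < k by omega) hn hO (G.flatMap Blk.toL).toFinset
        (by rw [List.toFinset_card_of_nodup g1, g4])
    rw [List.mem_toFinset] at ha hb hc hd
    refine ⟨Blk.four a b c d :: G, ?_, ?_, ?_, ?_⟩
    · rw [List.flatMap_cons, List.nodup_append']
      refine ⟨hnd, g1, ?_⟩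
      intro v hv
      simp only [Blk.toL, List.mem_cons, List.not_mem_nil, or_false] at hv
      rcases hv with rfl | rfl | rfl | rfl <;> assumption
    · intro w hw
      rcases List.mem_cons.1 hw with rfl | hw
      · exact hok
      · exact g2 w hw
    · simp only [List.map_cons, List.sum_cons, g3, Blk.gad]; omega
    · simp only [List.flatMap_cons, List.length_append, g4, Blk.toL, List.length_cons,
        List.length_nil]
      omega

lemma start [Fintype V] {A : V → V → Prop} (hA : IsOriented A) {k : ℕ}
    (hn : 26 + 4 * k ≤ Fintype.card V)
    (hO : ∀ u v, u ≠ v → ¬ Adj A u v → Fintype.card V + 8 * k ≤ deg A u + deg A v) :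
    ∃ L : List (Blk V), Good A k L := by
  classical
  obtain ⟨G, g1, g2, g3, _⟩ := gadgets hA hn hO k le_rfl
  set R := (Finset.univ \ (G.flatMap Blk.toL).toFinset).toList with hR
  have hflat : (R.map Blk.one).flatMap Blk.toL = R := by
    generalize R = R'
    induction R' with
    | nil => rfl
    | cons v R' ih => rw [List.map_cons, List.flatMap_cons, ih]; rfl
  refine ⟨G ++ R.map Blk.one, ?_, ?_, ?_⟩
  · rw [List.flatMap_append, hflat]
    apply (List.perm_ext_iff_of_nodup ?_ (Finset.nodup_toList _)).2
    · intro v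
      simp only [hR, List.mem_append, Finset.mem_toList, Finset.mem_sdiff, Finset.mem_univ,
        true_and, List.mem_toFinset, iff_true]
      exact em _
    · rw [List.nodup_append']
      refine ⟨g1, Finset.nodup_toList _, ?_⟩
      intro v hv hv2
      simp only [hR, Finset.mem_toList, Finset.mem_sdiff, Finset.mem_univ,
        true_and, List.mem_toFinset] at hv2
      exact hv2 hv
  · intro w hw
    rcases List.mem_append.1 hw with hw | hw
    · exact g2 w hw
    · obtain ⟨v, _, rfl⟩ := List.mem_map.1 hw
      trivial
  · have : ∀ R' : List V, ((R'.map Blk.one).map Blk.gad).sum = 0 := by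
      intro R'
      induction R' with
      | nil => rfl
      | cons v R' ih => simp only [List.map_cons, List.sum_cons, ih, Blk.gad]
    rw [List.map_append, List.sum_append, g3, this, add_zero]

lemma pc_sum (R : V → V → Prop) (d : V) (l : List V) :
    pc R l = ∑ i ∈ Finset.range (l.length - 1), ind (R (l.getD i d) (l.getD (i + 1) d)) := by
  induction l with
  | nil => rfl
  | cons x l ih =>
    cases l with
    | nil => rfl
    | cons y l =>
      rw [pc, ih]
      simp only [List.length_cons, Nat.add_sub_cancel]
      rw [Finset.sum_range_succ']
      rw [add_comm]
      simp

lemma to_equiv (n : ℕ) (hn : n ≠ 0) (l : List V) (hl : l.length = n) (nd : l.Nodup)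
    (hm : ∀ v, v ∈ l) :
    ∃ e : ZMod n ≃ V, ∀ R : V → V → Prop,
      cc R l = Nat.card {i : ZMod n // R (e i) (e (i + 1))} := by
  classical
  obtain ⟨m, rfl⟩ := Nat.exists_eq_succ_of_ne_zero hn
  let e0 : Fin l.length ≃ V := nd.getEquivOfForallMemList l hm
  let e : Fin (m + 1) ≃ V := (finCongr hl.symm).trans e0
  have he : ∀ (d : V) (i : Fin (m + 1)), e i = l.getD i.val d := by
    intro d i
    rw [List.getD_eq_getElem _ _ (by rw [hl]; exact i.2)]
    rfl
  refine ⟨e, fun R => ?_⟩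
  change _ = Nat.card {i : Fin (m + 1) // R (e i) (e (i + 1))}
  rw [Nat.card_eq_fintype_card, Fintype.card_subtype, Finset.card_filter]
  rw [Fin.sum_univ_castSucc]
  have d := e 0
  unfold cc
  congr 1
  · rw [pc_sum R d, hl, Nat.succ_sub_one, Finset.sum_range]
    apply Finset.sum_congr rfl
    intro i _
    rw [he d, he d, Fin.coeSucc_eq_succ]
    unfold ind
    simp
  · have h1 : l.head? = some (e 0) := by
      rw [he d]
      cases l with
      | nil => simp at hl
      | cons x l => simp
    have h2 : l.getLast? = some (e (Fin.last m)) := by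
      rw [he d, List.getLast?_eq_getElem?, hl]
      simp [hl]
    rw [h1, h2]
    simp [jn, ind]

lemma pc_total {A : V → V → Prop} (hA : IsOriented A) (l : List V)
    (h : pc (fun u v => ¬ Adj A u v) l = 0) :
    pc A l + pc (fun u v => A v u) l = l.length - 1 := by
  induction l with
  | nil => rfl
  | cons x l ih =>
    cases l with
    | nil => rfl
    | cons y l =>
      simp only [pc] at h
      have hxy : Adj A x y := by
        by_contra hne
        rw [ind_pos hne] at h
        omega
      have := ih (by omega)
      have := ind_adj hA hxy
      simp only [pc, List.length_cons] at *
      omega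

lemma cc_total {A : V → V → Prop} (hA : IsOriented A) (l : List V) (hl : l ≠ [])
    (h : cc (fun u v => ¬ Adj A u v) l = 0) :
    cc A l + cc (fun u v => A v u) l = l.length := by
  unfold cc at *
  have := pc_total hA l (by omega)
  have hpos := List.length_pos_iff.2 hl
  cases h1 : l.head? with
  | none => simp at h1; exact absurd h1 hl
  | some x =>
    cases h2 : l.getLast? with
    | none => simp at h2; exact absurd h2 hl
    | some z =>
      rw [h1, h2] at h
      simp only [jn] at *
      have hzx : Adj A z x := by
        by_contra hne
        rw [ind_pos hne] at h
        omega
      have := ind_adj hA hzx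
      omega

lemma finish [Fintype V] {A : V → V → Prop} (hA : IsOriented A) (hc : Fintype.card V ≠ 0)
    (l : List V) (hl : l.Perm Finset.univ.toList)
    (h : cc (fun u v => ¬ Adj A u v) l = 0) :
    ∃ e : ZMod (Fintype.card V) ≃ V, IsHamOrientedCycle A e ∧ sigmaPlus A e = cc A l ∧
      sigmaPlus A e + sigmaMinus A e = Fintype.card V := by
  have hlen : l.length = Fintype.card V := by
    rw [hl.length_eq, Finset.length_toList, Finset.card_univ]
  obtain ⟨e, he⟩ := to_equiv (Fintype.card V) hc l hlen
    (hl.nodup_iff.2 (Finset.nodup_toList _)) (fun v => hl.mem_iff.2 (by simp))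
  haveI : NeZero (Fintype.card V) := ⟨hc⟩
  refine ⟨e, ?_, (he A).symm, ?_⟩
  · intro i
    by_contra hne
    rw [he, Nat.card_eq_zero] at h
    rcases h with h | h
    · exact h.false ⟨i, hne⟩
    · exact (not_finite_iff_infinite.2 h) inferInstance
  · have := cc_total hA l (by rintro rfl; simp at hlen; omega) h
    rw [hlen, he, he] at this
    exact this

lemma main [Fintype V] {A : V → V → Prop} (hA : IsOriented A) {k : ℕ}
    (hn : 26 + 4 * k ≤ Fintype.card V)
    (hO : ∀ u v, u ≠ v → ¬ Adj A u v → Fintype.card V + 8 * k ≤ deg A u + deg A v) :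
    ∃ e : ZMod (Fintype.card V) ≃ V, IsHamOrientedCycle A e ∧
      (Fintype.card V + k + 1) / 2 ≤ sigmaMax A e := by
  obtain ⟨L0, g0⟩ := start hA hn hO
  obtain ⟨L, g, hL⟩ := exists_good hA (by omega) hO _ L0 g0 le_rfl
  have perm : ∀ h : Blk V → Blk V, (∀ w, (h w).toL.Perm w.toL) →
      ((L.map h).flatMap Blk.toL).Perm Finset.univ.toList := by
    intro h hh
    refine List.Perm.trans ?_ g.perm
    rw [List.flatMap_map]
    exact List.Perm.flatMap_left _ (fun w _ => hh w)
  have zero : ∀ h : Blk V → Blk V, (∀ w, (h w).fst = w.fst ∧ (h w).lst = w.lst) →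
      (∀ w, w.ok A → pc (fun u v => ¬ Adj A u v) (h w).toL = 0) →
      cc (fun u v => ¬ Adj A u v) ((L.map h).flatMap Blk.toL) = 0 := by
    intro h h1 h2
    rw [cc_flat_map _ h h1]
    have : cc (fun a b : Blk V => ¬ Adj A a.lst b.fst) L = 0 := hL
    rw [this, add_zero, List.sum_eq_zero_iff]
    intro x hx
    obtain ⟨w, hw, rfl⟩ := List.mem_map.1 hx
    exact h2 w (g.ok w hw)
  obtain ⟨e1, a1, b1, c1⟩ := finish hA (by omega) _ (perm _ (perm_hi A))
    (zero _ (ends_hi A) (bad_hi A))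
  obtain ⟨e2, a2, b2, c2⟩ := finish hA (by omega) _ (perm _ (perm_lo A))
    (zero _ (ends_lo A) (bad_lo A))
  rw [cc_flat_map _ _ (ends_hi A)] at b1
  rw [cc_flat_map _ _ (ends_lo A)] at b2
  have key : (L.map (fun w => pc A (w.lo A).toL)).sum + k ≤
      (L.map (fun w => pc A (w.hi A).toL)).sum := by
    rw [← g.gad]
    have hok := g.ok
    clear * - hok
    induction L with
    | nil => simp
    | cons w L ih =>
      have h1 := ih (fun u hu => hok u (List.mem_cons_of_mem _ hu))
      have h2 := hi_lo A w (hok w List.mem_cons_self)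
      simp only [List.map_cons, List.sum_cons]
      omega
  by_cases hcase : (Fintype.card V + k + 1) / 2 ≤ sigmaPlus A e1
  · exact ⟨e1, a1, hcase.trans (le_max_left _ _)⟩
  · refine ⟨e2, a2, le_trans ?_ (le_max_right _ _)⟩
    omega

end HamDisc

/-- If `D` is an oriented graph on `n ≥ 30 + 4(k-1)` vertices with
`s*(D) ≥ 8k`, then `D` has a Hamilton oriented cycle `C` with
`σ_max(C) ≥ ⌈(n+k)/2⌉`. -/
theorem stmt8 (k : ℕ) {V : Type*} [Fintype V] (A : V → V → Prop) (hA : IsOriented A)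
    (hn : 30 + 4 * ((k : ℤ) - 1) ≤ (Fintype.card V : ℤ))
    (hs : 8 * (k : ℤ) ≤ sStar A) :
    ∃ e : ZMod (Fintype.card V) ≃ V, IsHamOrientedCycle A e ∧
      (Fintype.card V + k + 1) / 2 ≤ sigmaMax A e := by
  apply HamDisc.main hA (by omega)
  intro u v huv hne
  have hne' : ¬ A u v ∧ ¬ A v u := not_or.1 hne
  unfold sStar at hs
  rw [if_pos ⟨u, v, huv, hne'⟩] at hs
  have hle := hs.trans (csInf_le ⟨-(Fintype.card V : ℤ), by
    rintro z ⟨a, b, _, _, _, rfl⟩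
    omega⟩ ⟨u, v, huv, hne'.1, hne'.2, rfl⟩)
  omega
end

section
/- Let D be a semicomplete multipartite digraph containing a 1-path-cycle factor whose path has its initial and terminal vertices in different partite sets. Then D contains a Hamilton path whose initial and terminal vertices belong to different partite sets. -/
/-- `A` is a semicomplete multipartite digraph with partition map `part`: there are no
loops, and two vertices are joined by at least one arc iff they are in different
partite sets. -/
def IsSemicompleteMultipartite {V : Type*} {p : ℕ} (A : V → V → Prop)
    (part : V → Fin p) : Prop :=
  (∀ v, ¬ A v v) ∧ ∀ u v : V, (A u v ∨ A v u) ↔ part u ≠ part v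

/-- `f` lists the vertices of a Hamilton oriented path of the digraph `A`. -/
def IsHamOrientedPath {V : Type*} [Fintype V] (A : V → V → Prop)
    (f : Fin (Fintype.card V) ≃ V) : Prop :=
  ∀ i : ℕ, ∀ h : i + 1 < Fintype.card V,
    A (f ⟨i, Nat.lt_of_succ_lt h⟩) (f ⟨i + 1, h⟩) ∨
      A (f ⟨i + 1, h⟩) (f ⟨i, Nat.lt_of_succ_lt h⟩)

/-- `f` lists the vertices of a Hamilton (directed) path of the digraph `A`. -/
def IsHamDipath {V : Type*} [Fintype V] (A : V → V → Prop)
    (f : Fin (Fintype.card V) ≃ V) : Prop :=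
  ∀ i : ℕ, ∀ h : i + 1 < Fintype.card V,
    A (f ⟨i, Nat.lt_of_succ_lt h⟩) (f ⟨i + 1, h⟩)

/-- Out-degree of `v` in the digraph `F`. -/
noncomputable def outdeg {V : Type*} [Fintype V] (F : V → V → Prop) (v : V) : ℕ :=
  Nat.card {u : V // F v u}

/-- In-degree of `v` in the digraph `F`. -/
noncomputable def indeg {V : Type*} [Fintype V] (F : V → V → Prop) (v : V) : ℕ :=
  Nat.card {u : V // F u v}

/-- `F` is a 1-path-cycle factor of the digraph `A`: a spanning subdigraph in which
every vertex has in- and out-degree at most one, with exactly one vertex of in-degree 0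
and exactly one vertex of out-degree 0; such a subdigraph consists of one directed path
together with a vertex-disjoint collection of directed cycles, covering all vertices. -/
def IsOnePathCycleFactor {V : Type*} [Fintype V] (A F : V → V → Prop) : Prop :=
  (∀ u v, F u v → A u v) ∧ (∀ v, outdeg F v ≤ 1 ∧ indeg F v ≤ 1) ∧
    (∃! s, indeg F s = 0) ∧ (∃! t, outdeg F t = 0)


namespace Stmt12Aux

/-- A closed walk of length `n`, indexed periodically by the integers. -/
structure CycF {V : Type*} (A : V → V → Prop) (c : ℤ → V) (n : ℕ) : Prop where
  pos : 0 < n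
  per : ∀ i, c (i + n) = c i
  arc : ∀ i, A (c i) (c (i + 1))

/-- The list `c i, c (i+1), …, c (i+k-1)`. -/
def seg {V : Type*} (c : ℤ → V) : ℤ → ℕ → List V
  | _, 0 => []
  | i, k + 1 => c i :: seg c (i + 1) k

section
variable {V : Type*} {A : V → V → Prop} {c : ℤ → V} {n : ℕ}

lemma seg_add (c : ℤ → V) (i : ℤ) (k l : ℕ) : seg c i (k + l) = seg c i k ++ seg c (i + k) l := by
  induction k generalizing i with
  | zero => simp [seg]
  | succ k ih =>
    have : k + 1 + l = (k + l) + 1 := by omega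
    rw [this]
    simp only [seg, ih, List.cons_append]
    congr 3
    push_cast; ring

lemma seg_head (c : ℤ → V) (i : ℤ) {k : ℕ} (hk : 0 < k) : (seg c i k).head? = some (c i) := by
  cases k with
  | zero => omega
  | succ k => simp [seg]

lemma seg_last (c : ℤ → V) (i : ℤ) {k : ℕ} (hk : 0 < k) :
    (seg c i k).getLast? = some (c (i + k - 1)) := by
  obtain ⟨k, rfl⟩ : ∃ m, k = m + 1 := ⟨k - 1, by omega⟩
  rw [seg_add]
  simp [seg]
  congr 1; ring

lemma seg_chain (h : ∀ i, A (c i) (c (i + 1))) (i : ℤ) (k : ℕ) : (seg c i k).IsChain A := by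
  induction k generalizing i with
  | zero => simp [seg]
  | succ k ih =>
    cases k with
    | zero => simp [seg]
    | succ k =>
      have := ih (i + 1)
      simp only [seg] at this ⊢
      exact List.IsChain.cons_cons (h i) this

lemma seg_ext (c c' : ℤ → V) (i i' : ℤ) (k : ℕ) (h : ∀ t : ℕ, t < k → c (i + t) = c' (i' + t)) :
    seg c i k = seg c' i' k := by
  induction k generalizing i i' with
  | zero => simp [seg]
  | succ k ih =>
    simp only [seg]
    congr 1
    · simpa using h 0 (by omega)
    · apply ih
      intro t ht
      have := h (t + 1) (by omega)
      push_cast at this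
      rw [add_assoc, add_assoc, add_comm 1 (t : ℤ)]
      exact this

lemma seg_perm_succ (h : CycF A c n) (i : ℤ) : (seg c (i + 1) n).Perm (seg c i n) := by
  obtain ⟨k, rfl⟩ : ∃ m, n = m + 1 := ⟨n - 1, by have := h.pos; omega⟩
  rw [seg_add c (i+1) k 1]
  have hp := h.per i
  push_cast at hp
  have : i + 1 + (k : ℤ) = i + (k + 1) := by ring
  simp only [seg, this, hp]
  exact List.perm_append_comm

lemma seg_perm (h : CycF A c n) (i : ℤ) : (seg c i n).Perm (seg c 0 n) := by
  induction i using Int.induction_on with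
  | zero => exact List.Perm.refl _
  | succ i ih => exact (seg_perm_succ h _).trans ih
  | pred i ih =>
    have := seg_perm_succ h (-(i:ℤ) - 1)
    rw [sub_add_cancel] at this
    exact this.symm.trans ih

lemma seg_rev (c : ℤ → V) (i : ℤ) (k : ℕ) :
    seg (fun j => c (-j)) i k = (seg c (-i - k + 1) k).reverse := by
  induction k generalizing i with
  | zero => simp [seg]
  | succ k ih =>
    rw [seg_add c _ k 1]
    simp only [seg, ih, List.reverse_append, List.reverse_cons, List.reverse_nil, List.nil_append,
      List.cons_append]
    congr 2
    · push_cast; ring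
    · congr 1
      push_cast; ring

lemma CycF.flip (h : CycF A c n) : CycF (fun x y => A y x) (fun j => c (-j)) n where
  pos := h.pos
  per i := by
    have := h.per (-(i + n))
    rw [← this]; congr 1; ring
  arc i := by
    have := h.arc (-(i + 1))
    rwa [show -(i+1)+1 = -i by ring] at this

/-- Turn a cyclic list into a periodic function. -/
lemma exists_cyc (l : List V) (x y : V) (hc : l.IsChain A) (hx : l.head? = some x)
    (hy : l.getLast? = some y) (hyx : A y x) : ∃ c n, CycF A c n ∧ seg c 0 n = l := by
  have hl : 0 < l.length := by
    cases l with
    | nil => simp at hx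
    | cons => simp
  have hlz : (0 : ℤ) < l.length := by exact_mod_cast hl
  have hb : ∀ i : ℤ, (i % (l.length : ℤ)).toNat < l.length := by
    intro i
    have h1 := Int.emod_nonneg i hlz.ne'
    have h2 := Int.emod_lt_of_pos i hlz
    omega
  refine ⟨fun i => l[(i % (l.length : ℤ)).toNat]'(hb i), l.length, ⟨hl, ?_, ?_⟩, ?_⟩
  · intro i
    simp
  · intro i
    have h1 := Int.emod_nonneg i hlz.ne'
    have h2 := Int.emod_lt_of_pos i hlz
    by_cases he : i % (l.length : ℤ) + 1 = l.length
    · have e1 : (i + 1) % (l.length : ℤ) = 0 := by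
        rw [← Int.emod_add_emod, he]; simp
      have e2 : (i % (l.length : ℤ)).toNat = l.length - 1 := by omega
      simp only [e1, e2]
      rw [List.head?_eq_getElem?] at hx
      rw [List.getLast?_eq_getElem?] at hy
      obtain ⟨_, hx⟩ := List.getElem?_eq_some_iff.1 hx
      obtain ⟨_, hy⟩ := List.getElem?_eq_some_iff.1 hy
      simpa [hx, hy] using hyx
    · have e1 : (i + 1) % (l.length : ℤ) = i % (l.length : ℤ) + 1 := by
        rw [← Int.emod_add_emod]
        exact Int.emod_eq_of_lt (by omega) (by omega)
      have e2 : ((i + 1) % (l.length : ℤ)).toNat = (i % (l.length : ℤ)).toNat + 1 := by omega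
      simp only [e2]
      exact List.isChain_iff_getElem.1 hc _ _
  · have gen : ∀ k (hk : k ≤ l.length), seg (fun i : ℤ => l[(i % (l.length : ℤ)).toNat]'(hb i)) 0 k
        = l.take k := by
      intro k hk
      induction k with
      | zero => simp [seg]
      | succ k ih =>
        rw [seg_add, ih (by omega), List.take_add_one]
        simp only [seg]
        have : ((0 + (k:ℤ)) % (l.length : ℤ)).toNat = k := by
          rw [Int.emod_eq_of_lt (by omega) (by omega)]; omega
        simp only [this]
        rw [List.getElem?_eq_getElem (by omega)]
        simp
    rw [gen _ le_rfl]; simp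

end

section
variable {V ι : Type*} {A : V → V → Prop} {part : V → ι} {c : ℤ → V} {n : ℕ}

lemma chain_app {l₁ l₂ : List V} (x y : V) (h₁ : l₁.IsChain A) (h₂ : l₂.IsChain A)
    (hx : l₁.getLast? = some x) (hy : l₂.head? = some y) (h : A x y) : (l₁ ++ l₂).IsChain A := by
  rw [List.isChain_append]
  refine ⟨h₁, h₂, ?_⟩
  intro a ha b hb
  rw [hx] at ha; rw [hy] at hb
  simp at ha hb
  subst ha; subst hb; exact h

lemma last_app (l : List V) (y : V) (t : List V) :
    (l ++ y :: t).getLast? = (y :: t).getLast? := by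
  rw [List.getLast?_append, List.getLast?_eq_some_getLast (List.cons_ne_nil y t)]
  simp

lemma last_cons_app (x : V) (R : List V) (y : V) :
    (x :: (R ++ [y])).getLast? = some y := by
  rw [← List.cons_append, last_app]; simp

/-- `A` is semicomplete multipartite with parts given by `part`. -/
def SMD (A : V → V → Prop) (part : V → ι) : Prop :=
  ∀ u v : V, (A u v ∨ A v u) ↔ part u ≠ part v

lemma SMD.ne (h : SMD A part) {u v : V} (huv : A u v) : part u ≠ part v := (h u v).1 (Or.inl huv)

lemma SMD.resolve (h : SMD A part) {u v : V} (huv : part u ≠ part v) (hn : ¬ A v u) : A u v :=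
  ((h u v).2 huv).resolve_right hn

lemma SMD.flip (h : SMD A part) : SMD (fun x y => A y x) part := by
  intro u v
  rw [or_comm]; exact h u v

/-- A path on the union with the same ends. -/
def Merge (A : V → V → Prop) (P : List V) (c : ℤ → V) (n : ℕ) : Prop :=
  ∃ L : List V, L.Perm (P ++ seg c 0 n) ∧ L.IsChain A ∧ L.head? = P.head? ∧
    L.getLast? = P.getLast?

/-- A path on the union with ends in different parts. -/
def Good (A : V → V → Prop) (part : V → ι) (P : List V) (c : ℤ → V) (n : ℕ) : Prop :=
  ∃ (L : List V) (x y : V), L.Perm (P ++ seg c 0 n) ∧ L.IsChain A ∧ L.head? = some x ∧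
    L.getLast? = some y ∧ part x ≠ part y

lemma isChain_flip {l : List V} (h : l.IsChain A) : l.reverse.IsChain (fun x y => A y x) := by
  rw [List.isChain_reverse]; exact h

lemma isChain_flip' {l : List V} (h : l.IsChain (fun x y => A y x)) : l.reverse.IsChain A := by
  rw [List.isChain_reverse]; exact h

lemma flip_perm (hc : CycF A c n) (P L : List V)
    (h : L.Perm (P.reverse ++ seg (fun j => c (-j)) 0 n)) :
    L.reverse.Perm (P ++ seg c 0 n) := by
  refine (List.reverse_perm L).trans (h.trans ?_)
  apply List.Perm.append (List.reverse_perm P)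
  rw [seg_rev]
  exact (List.reverse_perm _).trans (seg_perm hc _)

lemma Merge.of_flip (hc : CycF A c n) {P : List V}
    (h : Merge (fun x y => A y x) P.reverse (fun j => c (-j)) n) : Merge A P c n := by
  obtain ⟨L, h1, h2, h3, h4⟩ := h
  refine ⟨L.reverse, flip_perm hc P L h1, isChain_flip' h2, ?_, ?_⟩
  · simpa using h4
  · simpa using h3

lemma Good.of_flip (hc : CycF A c n) {P : List V}
    (h : Good (fun x y => A y x) part P.reverse (fun j => c (-j)) n) : Good A part P c n := by
  obtain ⟨L, x, y, h1, h2, h3, h4, h5⟩ := h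
  refine ⟨L.reverse, y, x, flip_perm hc P L h1, isChain_flip' h2, ?_, ?_, h5.symm⟩
  · simpa using h4
  · simpa using h3

lemma merge_insert (hc : CycF A c n) {P₁ P₂ : List V} {x y : V} {i : ℤ}
    (hP : (P₁ ++ x :: y :: P₂).IsChain A) (hx : A x (c (i + 1))) (hy : A (c i) y) :
    Merge A (P₁ ++ x :: y :: P₂) c n := by
  have e : P₁ ++ x :: y :: P₂ = (P₁ ++ [x]) ++ (y :: P₂) := by simp
  rw [e] at hP ⊢
  obtain ⟨h1, h2, -⟩ := List.isChain_append.1 hP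
  refine ⟨(P₁ ++ [x]) ++ (seg c (i + 1) n ++ (y :: P₂)), ?_, ?_, ?_, ?_⟩
  · rw [List.append_assoc (P₁ ++ [x]) (y :: P₂)]
    apply List.Perm.append_left
    refine List.perm_append_comm.trans ?_
    apply List.Perm.append_left
    exact seg_perm hc _
  · refine chain_app x (c (i + 1)) h1 ?_ (by simp) ?_ hx
    · refine chain_app (c i) y (seg_chain hc.arc _ _) h2 ?_ (by simp) hy
      rw [seg_last _ _ hc.pos, ← hc.per i]; congr 2; ring
    · rw [List.head?_append, seg_head _ _ hc.pos]; simp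
  · simp [List.head?_append]
  · rw [← List.append_assoc, last_app, last_app]

/-- Given two positions that are different modulo `n`, normalise the second one. -/
lemma exists_shift (hc : CycF A c n) (i j : ℤ) (hij : c i ≠ c j ∨ c (i + 1) ≠ c (j + 1)) :
    ∃ d e : ℕ, 0 < d ∧ 0 < e ∧ d + e = n ∧ c (i + d) = c j ∧ c (i + d + 1) = c (j + 1) := by
  have hn := hc.pos
  have hnz : (0 : ℤ) < n := by exact_mod_cast hn
  have h1 := Int.emod_nonneg (j - i) hnz.ne'
  have h2 := Int.emod_lt_of_pos (j - i) hnz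
  have hper : ∀ (k : ℤ) (q : ℤ), c (k + n * q) = c k := by
    intro k q
    induction q using Int.induction_on with
    | zero => simp
    | succ q ih => rw [← ih, ← hc.per (k + n * q)]; congr 1; ring
    | pred q ih => rw [← ih, ← hc.per]; congr 1; ring
  have hdm := Int.emod_add_mul_ediv (j - i) n
  have key : ∀ s : ℤ, c (i + (j - i) % n + s) = c (j + s) := by
    intro s
    rw [← hper _ ((j - i) / n)]
    congr 1; linarith
  have k0 := key 0
  have k1 := key 1
  simp only [add_zero] at k0
  have hd : (((j - i) % n).toNat : ℤ) = (j - i) % n := by omega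
  have hpos : (j - i) % n ≠ 0 := by
    intro h0
    rw [h0] at k0 k1
    simp only [add_zero] at k0 k1
    tauto
  refine ⟨((j - i) % n).toNat, n - ((j - i) % n).toNat, by omega, by omega, by omega, ?_, ?_⟩
  · rw [hd]; exact k0
  · rw [hd]; exact k1

/-- Splitting the closed walk in two segments. -/
lemma seg_split_perm (hc : CycF A c n) (i : ℤ) {d e : ℕ} (h : d + e = n) :
    (seg c (i + 1) d ++ seg c (i + d + 1) e).Perm (seg c 0 n) := by
  have : i + d + 1 = i + 1 + d := by ring
  rw [this, ← seg_add, h]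
  exact seg_perm hc _

lemma seg_last' (hc : CycF A c n) (i : ℤ) {d e : ℕ} (h : d + e = n) (he : 0 < e) :
    (seg c (i + d + 1) e).getLast? = some (c i) := by
  rw [seg_last _ _ he, ← hc.per i]; congr 2; subst h; push_cast; ring

lemma seg_last'' (i : ℤ) {d : ℕ} (hd : 0 < d) :
    (seg c (i + 1) d).getLast? = some (c (i + d)) := by
  rw [seg_last _ _ hd]; congr 2; ring

/-- The step lemma on vertices without in-arcs from the cycle. -/
lemma step (hA : SMD A part) (hc : CycF A c n) {P₁ P₂ : List V} {x y z : V}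
    (hP : (P₁ ++ x :: y :: z :: P₂).IsChain A)
    (hm : ¬ Merge A (P₁ ++ x :: y :: z :: P₂) c n) (hx : ∀ i, ¬ A (c i) x) :
    (∀ i, ¬ A (c i) y) ∨ (∀ i, ¬ A (c i) z) := by
  by_contra hcon
  push Not at hcon
  obtain ⟨⟨i, hi⟩, ⟨j, hj⟩⟩ := hcon
  have hxy : A x y := by
    have := (List.isChain_append.1 hP).2.1
    simp at this; exact this.1
  -- in-arcs of `y`
  have hy1 : ∀ i, A (c i) y → part x = part (c (i + 1)) := by
    intro i hi
    by_contra hne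
    exact hm (merge_insert hc hP (hA.resolve hne (hx _)) hi)
  have hy2 : ∀ i, part x = part (c (i + 1)) → A y (c (i + 1)) := by
    intro i hi
    refine hA.resolve (fun h => hA.ne hxy (hi.trans h.symm)) fun h => ?_
    exact hA.ne (hc.arc (i + 1)) (hi.symm.trans (hy1 _ h))
  have hz : part x ≠ part (c (j + 1)) := by
    intro h
    have e : P₁ ++ x :: y :: z :: P₂ = (P₁ ++ [x]) ++ y :: z :: P₂ := by simp
    rw [e] at hP hm
    exact hm (merge_insert hc hP (hy2 _ h) hj)
  have hxj := hA.resolve hz (hx _)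
  have hpi := hy1 i hi
  obtain ⟨d, e, hd, he, hde, h1, h2⟩ := exists_shift hc j i
    (Or.inr fun h => hz (by rw [hpi, h]))
  apply hm
  have eP : P₁ ++ x :: y :: z :: P₂ = (P₁ ++ [x]) ++ ([y] ++ (z :: P₂)) := by simp
  rw [eP] at hP ⊢
  obtain ⟨c1, c2, -⟩ := List.isChain_append.1 hP
  obtain ⟨-, c3, -⟩ := List.isChain_append.1 c2
  refine ⟨(P₁ ++ [x]) ++ (seg c (j + 1) d ++ ([y] ++ (seg c (j + d + 1) e ++ (z :: P₂)))),
    ?_, ?_, ?_, ?_⟩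
  · have hs := seg_split_perm hc j hde
    rw [List.append_assoc (P₁ ++ [x])]
    apply List.Perm.append_left
    refine List.Perm.trans ?_ (List.Perm.append_left _ hs)
    classical
    rw [List.perm_iff_count]
    intro a
    simp only [List.count_append]
    omega
  · refine chain_app x (c (j + 1)) c1 ?_ (by simp) (by simp [List.head?_append, seg_head _ _ hd]) hxj
    refine chain_app (c i) y (seg_chain hc.arc _ _) ?_ (by rw [seg_last'' _ hd, h1]) (by simp) hi
    refine chain_app y (c (i + 1)) (by simp) ?_ (by simp)
      (by simp [List.head?_append, seg_head _ _ he, h2]) (hy2 i hpi)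
    exact chain_app (c j) z (seg_chain hc.arc _ _) c3 (seg_last' hc _ hde he) (by simp) hj
  · simp [List.head?_append]
  · simp only [← List.append_assoc]
    rw [last_app, last_app]

lemma walk (hA : SMD A part) (hc : CycF A c n) {Q : List V} {x : V}
    (hP : (x :: Q).IsChain A) (hm : ¬ Merge A (x :: Q) c n) (hx : ∀ i, ¬ A (c i) x) (P₁ : List V) :
    ∀ y z R, x :: Q = P₁ ++ y :: z :: R → (∀ i, ¬ A (c i) y) ∨ (∀ i, ¬ A (c i) z) := by
  induction P₁ using List.reverseRecOn with
  | nil =>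
    intro y z R h
    simp at h
    left; rw [← h.1]; exact hx
  | append_singleton P₁ u ih =>
    intro y z R h
    have h' : x :: Q = P₁ ++ u :: y :: z :: R := by rw [h]; simp
    rcases ih _ _ _ h' with hu | hy
    · rw [h'] at hP hm
      exact step hA hc hP hm hu
    · exact Or.inl hy

/-- Two colours cannot cover a cycle in the wrong way. -/
lemma exists_arc (hA : SMD A part) (hc : CycF A c n) {a b : ι} (hab : a ≠ b) :
    ∃ i, part (c i) ≠ a ∧ part (c (i + 1)) ≠ b := by
  by_contra hcon
  push Not at hcon
  have h1 : ∀ i, part (c i) = a := by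
    intro i
    by_contra h
    have h2 := hcon i h
    have h3 := hcon (i + 1) (by rw [h2]; exact hab.symm)
    exact hA.ne (hc.arc (i + 1)) (h2.trans h3.symm)
  exact hA.ne (hc.arc 0) ((h1 0).trans (h1 _).symm)

lemma Merge.good {R : List V} {x y : V} (hxy : part x ≠ part y)
    (h : Merge A (x :: (R ++ [y])) c n) : Good A part (x :: (R ++ [y])) c n := by
  obtain ⟨L, h1, h2, h3, h4⟩ := h
  refine ⟨L, x, y, h1, h2, by simpa using h3, ?_, hxy⟩
  rw [h4, last_cons_app]

lemma chain_ends {R : List V} {x y : V} (hP : (x :: (R ++ [y])).IsChain A) :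
    (x :: R).IsChain A ∧ (R ++ [y]).IsChain A ∧ R.IsChain A := by
  have h1 : (R ++ [y]).IsChain A := by
    have : ([x] ++ (R ++ [y])).IsChain A := hP
    exact (List.isChain_append.1 this).2.1
  rw [← List.cons_append] at hP
  exact ⟨(List.isChain_append.1 hP).1, h1, (List.isChain_append.1 h1).1⟩

/-- Both ends singular in the good direction. -/
lemma caseB (hA : SMD A part) (hc : CycF A c n) {R : List V} {x y : V}
    (hP : (x :: (R ++ [y])).IsChain A) (hx : ∀ i, ¬ A (c i) x) (hy : ∀ i, ¬ A y (c i)) :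
    Merge A (x :: (R ++ [y])) c n := by
  obtain ⟨P₁, u, hu⟩ : ∃ P₁ u, x :: (R ++ [y]) = P₁ ++ u :: y :: [] := by
    rcases List.eq_nil_or_concat R with rfl | ⟨R', u, rfl⟩
    · exact ⟨[], x, by simp⟩
    · exact ⟨x :: R', u, by simp⟩
  by_contra hm
  rcases walk hA hc hP hm hx P₁ _ _ _ hu with h | h
  · rw [hu] at hP hm
    have huy : A u y := by
      have := (List.isChain_append.1 hP).2.1
      simpa using this
    obtain ⟨i, h1, h2⟩ := exists_arc hA hc (hA.ne huy).symm
    exact hm (merge_insert hc hP (hA.resolve h2.symm (h _)) (hA.resolve h1 (hy _)))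
  · have hz : ∀ i, part (c i) = part y := by
      intro i
      by_contra hne
      exact h i (hA.resolve hne (hy i))
    exact hA.ne (hc.arc 0) ((hz 0).trans (hz _).symm)

lemma end1 (hA : SMD A part) (hc : CycF A c n) {R : List V} {x y : V}
    (hP : (x :: (R ++ [y])).IsChain A) (hG : ¬ Good A part (x :: (R ++ [y])) c n)
    (hxy : part x ≠ part y) {i : ℤ} (hi : A (c i) x) :
    part (c (i + 1)) = part y ∧ A x (c (i + 1)) := by
  have key : ∀ i, A (c i) x → part (c (i + 1)) = part y := by
    intro i hi
    by_contra hne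
    apply hG
    refine ⟨seg c (i + 1) n ++ (x :: (R ++ [y])), c (i + 1), y, ?_, ?_, ?_, ?_, hne⟩
    · exact List.perm_append_comm.trans (List.Perm.append_left _ (seg_perm hc _))
    · refine chain_app (c i) x (seg_chain hc.arc _ _) hP ?_ (by simp) hi
      rw [seg_last _ _ hc.pos, ← hc.per i]; congr 2; ring
    · simp [List.head?_append, seg_head _ _ hc.pos]
    · rw [last_app, last_cons_app]
  have h1 := key i hi
  refine ⟨h1, hA.resolve (by rw [h1]; exact hxy) fun h => ?_⟩
  exact hA.ne (hc.arc (i + 1)) (h1.trans (key _ h).symm)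

lemma rev_eq (R : List V) (x y : V) : (x :: (R ++ [y])).reverse = y :: (R.reverse ++ [x]) := by
  simp

lemma end2 (hA : SMD A part) (hc : CycF A c n) {R : List V} {x y : V}
    (hP : (x :: (R ++ [y])).IsChain A) (hG : ¬ Good A part (x :: (R ++ [y])) c n)
    (hxy : part x ≠ part y) {i : ℤ} (hi : A y (c (i + 1))) :
    part (c i) = part x ∧ A (c i) y := by
  have hP' := isChain_flip hP
  have hG' := fun h => hG (Good.of_flip hc h)
  rw [rev_eq] at hP' hG'
  have := end1 hA.flip hc.flip hP' hG' hxy.symm (i := -(i + 1)) (by simpa using hi)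
  simpa using this

lemma caseA (hA : SMD A part) (hc : CycF A c n) {R : List V} {x y : V}
    (hP : (x :: (R ++ [y])).IsChain A) (hxy : part x ≠ part y)
    {i : ℤ} (hi : A (c i) x) (hy : ∀ i, ¬ A y (c i)) :
    Good A part (x :: (R ++ [y])) c n := by
  by_contra hG
  obtain ⟨hb, hxi⟩ := end1 hA hc hP hG hxy hi
  have hm : ¬ Merge A (x :: (R ++ [y])) c n := fun h => hG (h.good hxy)
  obtain ⟨z, T, hz, hlast⟩ : ∃ z T, R ++ [y] = z :: T ∧ (z :: T).getLast? = some y := by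
    cases R with
    | nil => exact ⟨y, [], by simp⟩
    | cons z T => exact ⟨z, T ++ [y], by simp, last_cons_app _ _ _⟩
  have hzin : ∀ i, ¬ A z (c i) := by
    have hP' := isChain_flip hP
    have hm' := fun h => hm (Merge.of_flip hc h)
    have e : (x :: (R ++ [y])).reverse = T.reverse ++ z :: x :: [] := by rw [hz]; simp
    rw [rev_eq] at hP' hm' e
    have := walk hA.flip hc.flip hP' hm' (fun i => hy _) _ _ _ _ e
    rcases this with h | h
    · intro i; simpa using h (-i)
    · exact absurd hxi (by simpa using h (-(i + 1)))
  rw [hz] at hP hG hm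
  have hP2 : (z :: T).IsChain A := by
    have : ([x] ++ (z :: T)).IsChain A := hP
    exact (List.isChain_append.1 this).2.1
  by_cases hzb : part z = part y
  · refine hm (merge_insert (P₁ := []) hc hP hxi (hA.resolve ?_ (hzin _)))
    rw [hzb, ← hb]; exact hA.ne (hc.arc i)
  · have hn : 1 < n := by
      have h0 := hc.pos
      by_contra h1
      have h2 : n = 1 := by omega
      have := hc.per i
      rw [h2] at this
      have h3 := hA.ne (hc.arc i)
      apply h3
      rw [← this]; rfl
    obtain ⟨k, rfl⟩ : ∃ k, n = k + 1 := ⟨n - 1, by omega⟩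
    have hk : 0 < k := by omega
    apply hG
    refine ⟨seg c (i + 1 + 1) k ++ (x :: c (i + 1) :: z :: T), c (i + 1 + 1), y, ?_, ?_, ?_, ?_, ?_⟩
    · have hs := seg_perm hc (i + 1)
      rw [show x :: z :: T ++ seg c 0 (k + 1) = x :: (z :: T ++ seg c 0 (k + 1)) from rfl]
      refine List.perm_middle.trans (List.Perm.cons _ ?_)
      refine List.Perm.trans ?_ (List.Perm.append_left _ hs)
      refine List.perm_middle.trans ?_
      refine List.Perm.trans ?_ List.perm_append_comm
      simp [seg]
    · refine chain_app (c i) x (seg_chain hc.arc _ _) ?_ ?_ (by simp) hi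
      · refine List.IsChain.cons_cons hxi (List.IsChain.cons_cons (hA.resolve ?_ (hzin _)) hP2)
        rw [hb]; exact Ne.symm hzb
      · rw [seg_last _ _ hk, ← hc.per i]; congr 2; push_cast; ring
    · simp [List.head?_append, seg_head _ _ hk]
    · rw [last_app, ← hlast]
      exact last_app [x, c (i + 1)] z T
    · rw [← hb]; exact (hA.ne (hc.arc (i + 1))).symm

/-- Moving vertices of the path to the cycle. -/
lemma good_of_perm {P P' : List V} {c' : ℤ → V} {n' : ℕ} (h : Good A part P' c' n')
    (hp : (P' ++ seg c' 0 n').Perm (P ++ seg c 0 n)) : Good A part P c n := by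
  obtain ⟨L, x, y, h1, h2⟩ := h
  exact ⟨L, x, y, h1.trans hp, h2⟩

theorem main (hA : SMD A part) (N : ℕ) : ∀ (R : List V) (x y : V) (c : ℤ → V) (n : ℕ),
    R.length ≤ N → CycF A c n → (x :: (R ++ [y])).IsChain A → part x ≠ part y →
    Good A part (x :: (R ++ [y])) c n := by
  induction N using Nat.strong_induction_on with
  | _ N ih =>
  intro R x y c n hN hc hP hxy
  by_contra hG
  by_cases h1 : ∃ i, A (c i) x
  swap
  · push Not at h1
    by_cases h2 : ∃ i, A y (c i)
    swap
    · push Not at h2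
      exact hG ((caseB hA hc hP h1 h2).good hxy)
    · obtain ⟨i, hi⟩ := h2
      apply hG
      apply Good.of_flip hc
      have hP' := isChain_flip hP
      rw [rev_eq] at hP' ⊢
      exact caseA hA.flip hc.flip hP' hxy.symm (i := -i) (by simpa using hi) (fun i => h1 _)
  obtain ⟨i, hi⟩ := h1
  by_cases h2 : ∃ i, A y (c i)
  swap
  · push Not at h2
    exact hG (caseA hA hc hP hxy hi h2)
  obtain ⟨j, hj⟩ := h2
  obtain ⟨j, rfl⟩ : ∃ k, j = k + 1 := ⟨j - 1, by ring⟩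
  obtain ⟨hi1, hi2⟩ := end1 hA hc hP hG hxy hi
  obtain ⟨hj1, hj2⟩ := end2 hA hc hP hG hxy hj
  obtain ⟨d, e, hd, he, hde, s1, s2⟩ := exists_shift hc i j
    (Or.inl fun h => hA.ne hi (by rw [h, hj1]))
  have hsp := seg_split_perm hc i hde
  have hseg : ∀ i, (seg c (i + 1) n).getLast? = some (c i) := by
    intro i
    rw [seg_last _ _ hc.pos, ← hc.per i]; congr 2; ring
  -- the big cycle
  have hbig : (x :: (seg c (i + 1) d ++ (y :: seg c (i + d + 1) e))).IsChain A := by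
    refine chain_app (l₁ := [x]) x (c (i + 1)) (by simp) ?_ (by simp)
      (by simp [List.head?_append, seg_head _ _ hd]) hi2
    refine chain_app (c j) y (seg_chain hc.arc _ _) ?_ (by rw [seg_last'' _ hd, s1]) (by simp) hj2
    exact chain_app (l₁ := [y]) y (c (j + 1)) (by simp) (seg_chain hc.arc _ _) (by simp)
      (by rw [seg_head _ _ he, s2]) hj
  have hbiglast : (x :: (seg c (i + 1) d ++ (y :: seg c (i + d + 1) e))).getLast? = some (c i) := by
    rw [← List.cons_append, last_app, ← List.singleton_append, List.getLast?_append,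
      seg_last' hc i hde he]
    simp
  have hbigperm : (x :: (seg c (i + 1) d ++ (y :: seg c (i + d + 1) e))).Perm
      (x :: y :: seg c 0 n) := by
    refine List.Perm.cons _ (List.perm_middle.trans (List.Perm.cons _ hsp))
  obtain ⟨c1, c2, c3⟩ := chain_ends hP
  rcases R with _ | ⟨u, T⟩
  · exact hG ⟨_, x, c i, hbigperm, hbig, by simp, hbiglast, (hA.ne hi).symm⟩
  by_cases hu : part u = part y
  swap
  · -- move `x` to the cycle
    obtain ⟨c', n', hc', hs'⟩ := exists_cyc (A := A) (x :: seg c (i + 1) n) x (c i)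
      (chain_app (l₁ := [x]) x (c (i + 1)) (by simp) (seg_chain hc.arc _ _) (by simp)
        (seg_head _ _ hc.pos) hi2) (by simp)
      (by rw [← List.singleton_append, List.getLast?_append, hseg]; simp) hi
    refine hG (good_of_perm (ih T.length ?_ T u y c' n' le_rfl hc' c2 hu) ?_)
    · simp at hN; omega
    · rw [hs']
      refine List.perm_middle.trans (List.Perm.cons _ ?_)
      exact List.Perm.append_left _ (seg_perm hc _)
  obtain ⟨S, v, hv⟩ : ∃ S v, u :: T = S ++ [v] := by
    rcases List.eq_nil_or_concat (u :: T) with h | ⟨S, v, h⟩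
    · simp at h
    · exact ⟨S, v, by simpa using h⟩
  by_cases hvx : part v = part x
  swap
  · obtain ⟨c', n', hc', hs'⟩ := exists_cyc (A := A) (y :: seg c (j + 1) n) y (c j)
      (chain_app (l₁ := [y]) y (c (j + 1)) (by simp) (seg_chain hc.arc _ _) (by simp)
        (seg_head _ _ hc.pos) hj) (by simp)
      (by rw [← List.singleton_append, List.getLast?_append, hseg]; simp) hj2
    have hlen := congrArg List.length hv
    simp at hlen hN
    rw [hv] at hG c1
    refine hG (good_of_perm (ih S.length (by omega) S x v c' n' le_rfl hc' c1 (Ne.symm hvx)) ?_)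
    rw [hs']
    have e1 : x :: (S ++ [v] ++ [y]) ++ seg c 0 n = x :: (S ++ [v]) ++ (y :: seg c 0 n) := by simp
    rw [e1]
    exact List.Perm.append_left _ (List.Perm.cons _ (seg_perm hc _))
  · rcases S with _ | ⟨w, S⟩
    · simp at hv
      rw [← hv.1, hu] at hvx
      exact hxy hvx.symm
    · simp at hv
      obtain ⟨rfl, hT⟩ := hv
      obtain ⟨c', n', hc', hs'⟩ := exists_cyc _ x (c i) hbig (by simp) hbiglast hi
      rw [hT] at hG c3
      have hlen := congrArg List.length hT
      simp at hlen hN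
      refine hG (good_of_perm (ih S.length (by omega) S u v c' n' le_rfl hc' c3
        (by rw [hu, hvx]; exact hxy.symm)) ?_)
      rw [hs']
      refine (List.Perm.append_left _ hbigperm).trans ?_
      refine List.perm_middle.trans ?_
      rw [List.cons_append]
      refine List.Perm.cons _ ?_
      simp

end

section
variable {V ι : Type*} {A : V → V → Prop} {part : V → ι}

lemma mem_seg (c : ℤ → V) (i : ℤ) (k : ℕ) (w : V) :
    w ∈ seg c i k ↔ ∃ t : ℕ, t < k ∧ c (i + t) = w := by
  induction k with
  | zero => simp [seg]
  | succ k ih =>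
    rw [seg_add, List.mem_append, ih]
    simp only [seg, List.mem_singleton]
    constructor
    · rintro (⟨t, h1, h2⟩ | h)
      · exact ⟨t, by omega, h2⟩
      · exact ⟨k, by omega, h.symm⟩
    · rintro ⟨t, h1, h2⟩
      by_cases h : t = k
      · subst h; exact Or.inr h2.symm
      · exact Or.inl ⟨t, by omega, h2⟩

lemma nodup_seg (c : ℤ → V) (i : ℤ) (k : ℕ)
    (h : ∀ s t : ℕ, s < k → t < k → c (i + s) = c (i + t) → s = t) : (seg c i k).Nodup := by
  induction k with
  | zero => simp [seg]
  | succ k ih =>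
    rw [seg_add, List.nodup_append]
    refine ⟨ih fun s t hs ht => h s t (by omega) (by omega), by simp [seg], ?_⟩
    intro a ha b hb hab
    rw [mem_seg] at ha
    simp only [seg, List.mem_singleton] at hb
    obtain ⟨t, ht, rfl⟩ := ha
    have := h t k (by omega) (by omega) (hab.trans hb)
    omega

lemma seg_chain' (c : ℤ → V) (i : ℤ) (k : ℕ)
    (h : ∀ t : ℕ, t + 1 < k → A (c (i + t)) (c (i + t + 1))) : (seg c i k).IsChain A := by
  induction k with
  | zero => simp [seg]
  | succ k ih =>
    rcases Nat.eq_zero_or_pos k with rfl | hk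
    · simp [seg]
    · rw [seg_add]
      refine chain_app _ (c (i + k)) (ih fun t ht => h t (by omega)) (by simp [seg]) (seg_last _ _ hk)
        (by simp only [seg, List.head?_cons]) ?_
      have := h (k - 1) (by omega)
      have e : ((k - 1 : ℕ) : ℤ) = k - 1 := by omega
      rw [e] at this
      convert this using 2 <;> ring

/-- The orbit of `v` under `σ`, as a function on the integers. -/
def orb (σ : Equiv.Perm V) (v : V) (k : ℤ) : V := (σ ^ k) v

lemma orb_zero (σ : Equiv.Perm V) (v : V) : orb σ v 0 = v := by simp [orb]

lemma orb_succ (σ : Equiv.Perm V) (v : V) (k : ℤ) : orb σ v (k + 1) = σ (orb σ v k) := by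
  rw [orb, add_comm, zpow_add]; simp [orb]

lemma orb_nat (σ : Equiv.Perm V) (v : V) (k : ℕ) : orb σ v k = σ^[k] v := by
  rw [orb, zpow_natCast, Equiv.Perm.iterate_eq_pow]

variable [Fintype V]

lemma minPer_pos (σ : Equiv.Perm V) (v : V) : 0 < Function.minimalPeriod σ v :=
  Function.minimalPeriod_pos_of_mem_periodicPts (σ.injective.mem_periodicPts v)

lemma orb_per (σ : Equiv.Perm V) (v : V) (k : ℤ) :
    orb σ v (k + Function.minimalPeriod σ v) = orb σ v k := by
  have h : orb σ v (Function.minimalPeriod σ v : ℤ) = v := by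
    rw [orb_nat]; exact Function.iterate_minimalPeriod
  rw [orb, zpow_add, Equiv.Perm.mul_apply]
  change (σ ^ k) (orb σ v _) = _
  rw [h]; rfl

lemma orb_nodup (σ : Equiv.Perm V) (v : V) :
    (seg (orb σ v) 0 (Function.minimalPeriod σ v)).Nodup := by
  apply nodup_seg
  intro s t hs ht h
  rw [zero_add, zero_add, orb_nat, orb_nat] at h
  exact Function.iterate_injOn_Iio_minimalPeriod hs ht h

lemma orb_closed (σ : Equiv.Perm V) (v w : V)
    (h : w ∈ seg (orb σ v) 0 (Function.minimalPeriod σ v)) :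
    σ w ∈ seg (orb σ v) 0 (Function.minimalPeriod σ v) := by
  rw [mem_seg] at h ⊢
  obtain ⟨t, ht, rfl⟩ := h
  rw [← orb_succ]
  by_cases h : t + 1 = Function.minimalPeriod σ v
  · refine ⟨0, by omega, ?_⟩
    have := orb_per σ v 0
    rw [← h] at this
    push_cast at this ⊢
    rw [add_assoc, this]
  · exact ⟨t + 1, by omega, by push_cast; rw [add_assoc]⟩

lemma decomp {L : List V} {x y : V} (h1 : L.head? = some x) (h2 : L.getLast? = some y)
    (hxy : x ≠ y) : ∃ R, L = x :: (R ++ [y]) := by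
  cases L with
  | nil => simp at h1
  | cons a T =>
    simp at h1
    subst h1
    rcases List.eq_nil_or_concat T with rfl | ⟨R, u, rfl⟩
    · simp at h2; exact absurd h2 hxy
    · rw [List.concat_eq_append, last_cons_app] at h2
      simp at h2; subst h2
      exact ⟨R, by simp⟩

theorem absorb (hA : SMD A part) (σ : Equiv.Perm V) (N : ℕ) : ∀ (L : List V) (x y : V),
    Fintype.card V - L.length ≤ N → L.Nodup → L.IsChain A → L.head? = some x →
    L.getLast? = some y → part x ≠ part y → (∀ v ∈ L, σ v ∈ L) → (∀ v, v ∉ L → A v (σ v)) →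
    ∃ (L' : List V) (x y : V), L'.Nodup ∧ (∀ v, v ∈ L') ∧ L'.IsChain A ∧ L'.head? = some x ∧
      L'.getLast? = some y ∧ part x ≠ part y := by
  induction N with
  | zero =>
    intro L x y hN hnd hch hx hy hxy _ _
    refine ⟨L, x, y, hnd, ?_, hch, hx, hy, hxy⟩
    intro v
    by_contra hv
    have : (v :: L).Nodup := List.nodup_cons.2 ⟨hv, hnd⟩
    have := this.length_le_card
    simp at this
    omega
  | succ N ih =>
    intro L x y hN hnd hch hx hy hxy hcl hout
    by_cases hall : ∀ v, v ∈ L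
    · exact ⟨L, x, y, hnd, hall, hch, hx, hy, hxy⟩
    push Not at hall
    obtain ⟨v, hv⟩ := hall
    have hiter : ∀ (k : ℕ) w, w ∈ L → σ^[k] w ∈ L := by
      intro k
      induction k with
      | zero => intro w hw; exact hw
      | succ k ihk => intro w hw; exact ihk _ (hcl _ hw)
    have hpow : ∀ (w : V), w ∈ L → ∀ k : ℤ, (σ ^ k) w ∈ L := by
      intro w hw k
      have hfin : σ ^ k ∈ Submonoid.powers σ := by
        rw [mem_powers_iff_mem_zpowers]
        exact ⟨k, rfl⟩
      obtain ⟨m, hm⟩ := hfin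
      rw [← hm]
      have := hiter m w hw
      rwa [Equiv.Perm.iterate_eq_pow] at this
    have horb : ∀ k, orb σ v k ∉ L := by
      intro k hk
      have := hpow _ hk (-k)
      rw [orb, ← Equiv.Perm.mul_apply, ← zpow_add] at this
      simp at this
      exact hv this
    have hc : CycF A (orb σ v) (Function.minimalPeriod σ v) :=
      ⟨minPer_pos σ v, orb_per σ v, fun i => by rw [orb_succ]; exact hout _ (horb i)⟩
    obtain ⟨R, rfl⟩ := decomp hx hy (fun h => hxy (by rw [h]))
    obtain ⟨L', x', y', hp, hch', hx', hy', hxy'⟩ :=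
      main hA R.length R x y _ _ le_rfl hc hch hxy
    have hmem : ∀ w, w ∈ L' ↔ w ∈ x :: (R ++ [y]) ∨
        w ∈ seg (orb σ v) 0 (Function.minimalPeriod σ v) := by
      intro w; rw [hp.mem_iff, List.mem_append]
    refine ih L' x' y' ?_ ?_ hch' hx' hy' hxy' ?_ ?_
    · have hl := hp.length_eq
      have hpos : 0 < (seg (orb σ v) 0 (Function.minimalPeriod σ v)).length := by
        apply List.length_pos_of_mem (a := v)
        rw [mem_seg]
        exact ⟨0, minPer_pos σ v, by simpa using orb_zero σ v⟩
      rw [List.length_append] at hl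
      omega
    · rw [hp.nodup_iff, List.nodup_append]
      refine ⟨hnd, orb_nodup σ v, ?_⟩
      intro a ha b hb hab
      rw [mem_seg] at hb
      obtain ⟨t, _, rfl⟩ := hb
      rw [hab] at ha
      exact horb _ ha
    · intro w hw
      rw [hmem] at hw ⊢
      exact hw.imp (hcl w) (orb_closed σ v w)
    · intro w hw
      rw [hmem] at hw
      push Not at hw
      exact hout w hw.1

end

lemma indeg_zero {V : Type*} [Fintype V] (F : V → V → Prop) (v : V) :
    indeg F v = 0 ↔ ∀ u, ¬ F u v := by
  unfold indeg
  rw [Finite.card_eq_zero_iff, isEmpty_subtype]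

lemma outdeg_zero {V : Type*} [Fintype V] (F : V → V → Prop) (v : V) :
    outdeg F v = 0 ↔ ∀ u, ¬ F v u := by
  unfold outdeg
  rw [Finite.card_eq_zero_iff, isEmpty_subtype]

/-- The permutation obtained by closing up the path of the factor. -/
lemma exists_perm {V : Type*} [Fintype V] {A F : V → V → Prop} (hF : IsOnePathCycleFactor A F) :
    ∃ (σ : Equiv.Perm V) (s t : V), indeg F s = 0 ∧ outdeg F t = 0 ∧ σ t = s ∧
      ∀ v, v ≠ t → A v (σ v) := by
  classical
  obtain ⟨hFA, hdeg, ⟨s, hs, hs'⟩, ⟨t, ht, ht'⟩⟩ := hF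
  have hin : ∀ u u' v, F u v → F u' v → u = u' := by
    intro u u' v h h'
    have := Finite.card_le_one_iff_subsingleton.1 (hdeg v).2
    have := this.elim ⟨u, h⟩ ⟨u', h'⟩
    simpa using this
  have hnt : ∀ v, v ≠ t → ∃ u, F v u := by
    intro v hv
    by_contra h
    push Not at h
    exact hv (ht' v ((outdeg_zero F v).2 h))
  choose! g hg using hnt
  let f : V → V := fun v => if v = t then s else g v
  have hft : f t = s := by simp [f]
  have hfn : ∀ v, v ≠ t → F v (f v) := by
    intro v hv
    simp only [f, if_neg hv]
    exact hg v hv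
  have hs0 := (indeg_zero F s).1 hs
  have hinj : Function.Injective f := by
    intro u v huv
    by_cases hu : u = t
    · by_cases hv : v = t
      · rw [hu, hv]
      · have := hfn v hv
        rw [← huv, hu, hft] at this
        exact absurd this (hs0 v)
    · have h1 := hfn u hu
      by_cases hv : v = t
      · rw [huv, hv, hft] at h1
        exact absurd h1 (hs0 u)
      · rw [huv] at h1
        exact hin _ _ _ h1 (hfn v hv)
  refine ⟨Equiv.ofBijective f (Finite.injective_iff_bijective.1 hinj), s, t, hs, ht, hft, ?_⟩
  intro v hv
  exact hFA _ _ (hfn v hv)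

end Stmt12Aux

open Stmt12Aux

/-- if a semicomplete multipartite digraph has a 1-path-cycle factor
whose path has initial and terminal vertices in different partite sets, then it has a
Hamilton directed path whose initial and terminal vertices are in different partite
sets. (The initial vertex of the path of a 1-path-cycle factor is its unique vertex of
in-degree 0, the terminal vertex its unique vertex of out-degree 0.) -/
theorem stmt12 {V : Type*} [Fintype V] [Nonempty V] {p : ℕ} (hp : 2 ≤ p)
    (A : V → V → Prop) (part : V → Fin p)
    (hsmd : IsSemicompleteMultipartite A part) (hne : Function.Surjective part)
    (F : V → V → Prop) (hF : IsOnePathCycleFactor A F)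
    (hends : ∀ s t : V, indeg F s = 0 → outdeg F t = 0 → part s ≠ part t) :
    ∃ f : Fin (Fintype.card V) ≃ V, IsHamDipath A f ∧
      ∀ h0 : 0 < Fintype.card V,
        part (f ⟨0, h0⟩) ≠ part (f ⟨Fintype.card V - 1, Nat.sub_lt h0 one_pos⟩) := by
  classical
  have hA : SMD A part := hsmd.2
  obtain ⟨σ, s, t, hs, ht, hst, hσ⟩ := exists_perm hF
  have hparts := hends s t hs ht
  have hlast : orb σ s (Function.minimalPeriod σ s - 1) = t := by
    apply σ.injective
    rw [← orb_succ, hst, sub_add_cancel]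
    simpa [orb_zero] using orb_per σ s 0
  have hmt : t ∈ seg (orb σ s) 0 (Function.minimalPeriod σ s) := by
    rw [mem_seg]
    have := minPer_pos σ s
    refine ⟨Function.minimalPeriod σ s - 1, by omega, ?_⟩
    rw [← hlast]; congr 1; omega
  obtain ⟨L, x, y, hnd, hall, hch, hx, hy, hxy⟩ :=
    absorb hA σ _ (seg (orb σ s) 0 (Function.minimalPeriod σ s)) s t le_rfl (orb_nodup σ s)
      (by
        apply seg_chain'
        intro k hk
        rw [orb_succ]
        apply hσ
        intro h
        have h2 : orb σ s (0 + k + 1) = s := by rw [orb_succ, h, hst]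
        rw [zero_add] at h2
        have h3 : σ^[k + 1] s = σ^[0] s := by
          rw [← orb_nat]; push_cast; exact h2
        have := Function.iterate_injOn_Iio_minimalPeriod (f := σ) (x := s) hk
          (minPer_pos σ s) h3
        omega)
      (by rw [seg_head _ _ (minPer_pos σ s), orb_zero])
      (by rw [seg_last _ _ (minPer_pos σ s), zero_add, hlast])
      hparts (orb_closed σ s) (fun v hv => hσ v fun h => hv (h ▸ hmt))
  have hlen : L.length = Fintype.card V := by
    rw [← List.toFinset_card_of_nodup hnd, ← Finset.card_univ]
    congr 1
    ext v; simp [hall]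
  refine ⟨(finCongr hlen.symm).trans (List.Nodup.getEquivOfForallMemList L hnd hall), ?_, ?_⟩
  · intro i h
    simpa using List.isChain_iff_getElem.1 hch i (by omega)
  · intro h0
    rw [List.head?_eq_getElem?] at hx
    rw [List.getLast?_eq_getElem?] at hy
    obtain ⟨_, hx⟩ := List.getElem?_eq_some_iff.1 hx
    obtain ⟨_, hy⟩ := List.getElem?_eq_some_iff.1 hy
    subst hx; subst hy
    simpa [hlen] using hxy
end

section
/- A semicomplete multipartite digraph has a Hamilton (directed) path if and only if it contains a 1-path-cycle factor. -/
def seg13 {V : Type*} (f : ℤ → V) (a b : ℤ) : List V :=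
  (List.range (b - a).toNat).map (fun t : ℕ => f (a + (t : ℤ)))

theorem seg13_append {V : Type*} (f : ℤ → V) (a b c : ℤ) (h1 : a ≤ b) (h2 : b ≤ c) :
    seg13 f a b ++ seg13 f b c = seg13 f a c := by
  obtain ⟨m, rfl⟩ := Int.le.dest h1
  obtain ⟨n, rfl⟩ := Int.le.dest h2
  unfold seg13
  have e1 : (a + (m:ℤ) - a).toNat = m := by omega
  have e2 : (a + (m:ℤ) + n - (a + m)).toNat = n := by omega
  have e3 : (a + (m:ℤ) + n - a).toNat = m + n := by omega
  rw [e1, e2, e3, List.range_add, List.map_append, List.map_map]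
  congr 1
  apply List.map_congr_left
  intro t _
  simp [add_assoc]

theorem seg13_single {V : Type*} (f : ℤ → V) (a : ℤ) : seg13 f a (a + 1) = [f a] := by
  unfold seg13
  have e1 : (a + 1 - a).toNat = 1 := by omega
  rw [e1]; simp

theorem seg13_shift {V : Type*} (c : ℤ → V) (n : ℤ) (hn : 1 ≤ n) (hper : ∀ j, c (j + n) = c j)
    (a : ℤ) : (seg13 c a (a + n)).Perm (seg13 c (a + 1) (a + 1 + n)) := by
  rw [← seg13_append c a (a + 1) (a + n) (by omega) (by omega),
    ← seg13_append c (a + 1) (a + n) (a + 1 + n) (by omega) (by omega),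
    show a + 1 + n = a + n + 1 by ring, seg13_single, seg13_single, hper]
  exact List.perm_append_comm

theorem seg13_rot {V : Type*} (c : ℤ → V) (n : ℤ) (hn : 1 ≤ n) (hper : ∀ j, c (j + n) = c j)
    (a : ℤ) : (seg13 c a (a + n)).Perm (seg13 c 0 n) := by
  induction a using Int.induction_on with
  | zero => simp
  | succ i ih => exact (seg13_shift c n hn hper i).symm.trans ih
  | pred i ih =>
    refine (seg13_shift c n hn hper _).trans ?_
    simpa using ih

def Path13 {V : Type*} (A : V → V → Prop) (u v : V) (L : List V) : Prop :=
  L.IsChain A ∧ L.head? = some u ∧ L.getLast? = some v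

theorem Path13.append {V : Type*} {A : V → V → Prop} {u v u' v' : V} {L L' : List V}
    (h : Path13 A u v L) (h' : Path13 A u' v' L') (hA : A v u') : Path13 A u v' (L ++ L') := by
  obtain ⟨h1, h2, h3⟩ := h
  obtain ⟨h1', h2', h3'⟩ := h'
  refine ⟨?_, ?_, ?_⟩
  · rw [List.isChain_append]
    refine ⟨h1, h1', ?_⟩
    rw [h3, h2']
    simpa using hA
  · simp [List.head?_append, h2]
  · simp [List.getLast?_append, h3']

theorem seg13_path {V : Type*} {A : V → V → Prop} (f : ℤ → V) (a : ℤ) (n : ℕ)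
    (h : ∀ i, a ≤ i → i < a + n → A (f i) (f (i + 1))) :
    Path13 A (f a) (f (a + n)) (seg13 f a (a + n + 1)) := by
  induction n with
  | zero => simp [seg13_single, Path13]
  | succ n ih =>
    have := (ih (fun i h1 h2 => h i h1 (by push_cast; omega)))
    rw [← seg13_append f a (a + n + 1) _ (by omega) (by push_cast; omega)]
    push_cast
    rw [show a + ((n:ℤ) + 1) + 1 = a + n + 1 + 1 by ring, seg13_single,
      show a + ((n:ℤ) + 1) = a + n + 1 by ring]
    refine this.append (u' := f (a + n + 1)) ⟨by simp, by simp, by simp⟩ ?_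
    exact h _ (by omega) (by push_cast; omega)

theorem seg13_path' {V : Type*} {A : V → V → Prop} (f : ℤ → V) (a b : ℤ) (hab : a < b)
    (h : ∀ i, a ≤ i → i + 1 < b → A (f i) (f (i + 1))) :
    Path13 A (f a) (f (b - 1)) (seg13 f a b) := by
  obtain ⟨n, hn⟩ := Int.le.dest (show a + 1 ≤ b by omega)
  have := seg13_path (A := A) f a n (fun i h1 h2 => h i h1 (by omega))
  rw [show a + (n:ℤ) + 1 = b by omega, show a + (n:ℤ) = b - 1 by omega] at this
  exact this

theorem merge13 {V : Type*} {p : ℕ} (A : V → V → Prop) (part : V → Fin p)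
    (hsmd : IsSemicompleteMultipartite A part) (x : ℤ → V) (k : ℤ) (hk : 1 ≤ k)
    (hx : ∀ i, 0 ≤ i → i + 1 < k → A (x i) (x (i + 1)))
    (c : ℤ → V) (n : ℤ) (hn : 1 ≤ n) (hper : ∀ j, c (j + n) = c j)
    (hc : ∀ j, A (c j) (c (j + 1))) :
    ∃ L : List V, L.IsChain A ∧ L.Perm (seg13 x 0 k ++ seg13 c 0 n) := by
  by_contra hno
  have hperz : ∀ (q j : ℤ), c (j + q * n) = c j := by
    intro q
    induction q using Int.induction_on with
    | zero => simp
    | succ i ih =>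
      intro j
      rw [show j + ((i:ℤ) + 1) * n = (j + i * n) + n by ring, hper, ih]
    | pred i ih =>
      intro j
      rw [← ih j, ← hper, show j + (-(i:ℤ) - 1) * n + n = j + -(i:ℤ) * n by ring]
  have xadj : ∀ i, 0 ≤ i → i + 1 < k → part (x i) ≠ part (x (i + 1)) := fun i h1 h2 =>
    (hsmd.2 _ _).1 (Or.inl (hx i h1 h2))
  have cadj : ∀ j, part (c j) ≠ part (c (j + 1)) := fun j => (hsmd.2 _ _).1 (Or.inl (hc j))
  -- basic segments
  have px : ∀ a b, 0 ≤ a → a < b → b ≤ k → Path13 A (x a) (x (b - 1)) (seg13 x a b) :=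
    fun a b h1 h2 h3 => seg13_path' x a b h2 (fun i hi hi' => hx i (by omega) (by omega))
  have pc : ∀ a b, a < b → Path13 A (c a) (c (b - 1)) (seg13 c a b) :=
    fun a b h2 => seg13_path' c a b h2 (fun i hi hi' => hc i)
  have clast : ∀ j, c (j + n - 1) = c (j - 1) := fun j => by
    rw [show j + n - 1 = j - 1 + n by ring, hper]
  have pcc : ∀ j, Path13 A (c j) (c (j - 1)) (seg13 c j (j + n)) := fun j => by
    have := pc j (j + n) (by omega)
    rwa [clast] at this
  -- moves
  have M0 : ∀ j, ¬ A (c j) (x 0) := by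
    intro j hj
    refine hno ⟨_, ((pcc (j + 1)).append (px 0 k le_rfl (by omega) le_rfl) (by simpa using hj)).1, ?_⟩
    exact List.perm_append_comm.trans ((seg13_rot c n hn hper _).append_left _)
  have M1 : ∀ j, ¬ A (x (k - 1)) (c j) := by
    intro j hj
    refine hno ⟨_, ((px 0 k le_rfl (by omega) le_rfl).append (pcc j) hj).1, ?_⟩
    exact ((seg13_rot c n hn hper _).append_left _)
  have M2 : ∀ i j, 0 ≤ i → i + 1 < k → A (x i) (c (j + 1)) → ¬ A (c j) (x (i + 1)) := by
    intro i j h1 h2 h3 h4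
    refine hno ⟨_, (((px 0 (i + 1) le_rfl (by omega) (by omega)).append (pcc (j + 1))
      (by simpa using h3)).append (px (i + 1) k (by omega) h2 le_rfl) (by simpa using h4)).1, ?_⟩
    rw [← seg13_append x 0 (i + 1) k (by omega) (by omega)]
    have := seg13_rot c n hn hper (j + 1)
    rw [← Multiset.coe_eq_coe] at this ⊢
    simp only [← Multiset.coe_add] at this ⊢
    rw [this]; abel
  have M3 : ∀ l i j m, 0 ≤ l → l < i → i + 1 < k → A (x l) (c (j + 1)) → A (c j) (x (i + 1)) →
      A (c m) (x (l + 1)) → A (x i) (c (m + 1)) → c m ≠ c j → False := by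
    intro l i j m' h1 h2 h3 h4 h5 h6' h7' hmj'
    obtain ⟨m, hm1, hm2, e1, e2⟩ : ∃ m, j ≤ m ∧ m < j + n ∧ c m = c m' ∧ c (m + 1) = c (m' + 1) := by
      refine ⟨j + (m' - j) % n, ?_, ?_, ?_, ?_⟩
      · have := Int.emod_nonneg (m' - j) (show n ≠ 0 by omega); omega
      · have := Int.emod_lt_of_pos (m' - j) (show 0 < n by omega); omega
      · rw [← hperz ((m' - j) / n)]
        congr 1
        have := Int.emod_add_mul_ediv (m' - j) n
        linarith
      · rw [← hperz ((m' - j) / n)]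
        congr 1
        have := Int.emod_add_mul_ediv (m' - j) n
        linarith
    rw [← e1] at h6' hmj'
    rw [← e2] at h7'
    have hjm : j < m := by
      rcases eq_or_lt_of_le hm1 with h | h
      · exact absurd (by rw [h]) hmj'
      · exact h
    have q1 := px 0 (l + 1) le_rfl (by omega) (by omega)
    have q2 := pc (j + 1) (m + 1) (by omega)
    have q3 := px (l + 1) (i + 1) (by omega) (by omega) (by omega)
    have q4 := pc (m + 1) (j + 1 + n) (by omega)
    have q5 := px (i + 1) k (by omega) (by omega) le_rfl
    rw [clast] at q4
    simp only [add_sub_cancel_right] at q1 q2 q3 q4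
    refine hno ⟨_, ((((q1.append q2 h4).append q3 h6').append q4 h7').append q5 h5).1, ?_⟩
    rw [← seg13_append x 0 (l + 1) k (by omega) (by omega),
      ← seg13_append x (l + 1) (i + 1) k (by omega) (by omega)]
    have := seg13_rot c n hn hper (j + 1)
    rw [← seg13_append c (j + 1) (m + 1) _ (by omega) (by omega)] at this
    rw [← Multiset.coe_eq_coe] at this ⊢
    simp only [← Multiset.coe_add] at this ⊢
    rw [← this]; abel
  -- x 0 has an out-arc
  have out0 : ∀ j, part (x 0) ≠ part (c j) → A (x 0) (c j) := by
    intro j hj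
    rcases (hsmd.2 _ _).2 hj with h | h
    · exact h
    · exact absurd h (M0 j)
  have ex0 : ∃ j, A (x 0) (c j) := by
    by_cases h : part (x 0) = part (c 0)
    · exact ⟨0 + 1, out0 _ (by rw [h]; exact cadj 0)⟩
    · exact ⟨0, out0 _ h⟩
  obtain ⟨i, hi0, hik, ⟨m0, hm0⟩, hlast⟩ : ∃ i, 0 ≤ i ∧ i + 1 < k ∧ (∃ j, A (x i) (c j)) ∧
      ∀ j, ¬ A (x (i + 1)) (c j) := by
    by_contra hcon
    push Not at hcon
    have : ∀ q : ℕ, (q : ℤ) < k → ∃ j, A (x q) (c j) := by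
      intro q
      induction q with
      | zero => intro _; exact ex0
      | succ q ih =>
        intro hq
        push_cast at hq ⊢
        obtain ⟨j, hj⟩ := ih (by omega)
        exact hcon q (by omega) hq ⟨j, hj⟩
    obtain ⟨j, hj⟩ := this (k - 1).toNat (by omega)
    rw [show (((k - 1).toNat : ℕ) : ℤ) = k - 1 by omega] at hj
    exact M1 j hj
  obtain ⟨m, rfl⟩ : ∃ m, m0 = m + 1 := ⟨m0 - 1, by ring⟩
  have hdom : ∀ j, part (c j) ≠ part (x (i + 1)) → A (c j) (x (i + 1)) := by
    intro j hj
    rcases (hsmd.2 _ _).2 hj with h | h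
    · exact h
    · exact absurd h (hlast j)
  have hZ : ∀ j, part (c j) = part (x (i + 1)) → part (c (j + 1)) ≠ part (x (i + 1)) := by
    intro j hj
    rw [← hj]; exact (cadj j).symm
  have Hi : ∀ j, A (x i) (c (j + 1)) → part (c j) = part (x (i + 1)) := by
    intro j hj
    by_contra h
    exact M2 i j hi0 hik hj (hdom j h)
  -- consequence of H
  have Hdom : ∀ l, (∀ j, A (x l) (c (j + 1)) → part (c j) = part (x (i + 1))) →
      part (x l) ≠ part (x (i + 1)) → ∀ j, part (c j) = part (x (i + 1)) → A (c j) (x l) := by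
    intro l hl hlZ j hj
    rcases (hsmd.2 (c j) (x l)).2 (by rw [hj]; exact hlZ.symm) with h | h
    · exact h
    · exfalso
      have h' := hl (j - 1) (by simpa using h)
      have := hZ _ h'
      rw [sub_add_cancel] at this
      exact this hj
  have H : ∀ d : ℕ, ∀ l, 0 ≤ l → l + d = i →
      ∀ j, A (x l) (c (j + 1)) → part (c j) = part (x (i + 1)) := by
    intro d
    induction d using Nat.strong_induction_on with
    | _ d ih =>
      intro l hl hld j hj
      rcases Nat.eq_zero_or_pos d with hd | hd
      · have : l = i := by omega
        subst this
        exact Hi j hj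
      by_contra hjZ
      have H1 := ih (d - 1) (by omega) (l + 1) (by omega) (by omega)
      by_cases hlZ : part (x (l + 1)) = part (x (i + 1))
      · have hne : l + 1 ≠ i := by
          intro h
          rw [h] at hlZ
          exact xadj i hi0 hik hlZ
        have H2 := ih (d - 2) (by omega) (l + 1 + 1) (by omega) (by omega)
        rcases (hsmd.2 (c j) (x (l + 1))).2 (by rw [hlZ]; exact hjZ) with h | h
        · exact M2 l j hl (by omega) hj h
        · have h3 := H1 (j - 1) (by simpa using h)
          refine M2 (l + 1) (j - 1) (by omega) (by omega) (by simpa using h) ?_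
          refine Hdom _ H2 ?_ _ h3
          rw [← hlZ]
          exact (xadj (l + 1) (by omega) (by omega)).symm
      · refine M3 l i j m hl (by omega) hik hj (hdom j hjZ) (Hdom _ H1 hlZ _ (Hi m hm0)) hm0 ?_
        intro h
        rw [← h] at hjZ
        exact hjZ (Hi m hm0)
  have H0 := H i.toNat 0 le_rfl (by omega)
  have hmZ := Hi m hm0
  by_cases h0 : part (x 0) = part (x (i + 1))
  · have a1 : A (x 0) (c (m + 1)) := out0 _ (by rw [h0]; exact (hZ m hmZ).symm)
    have hi1 : i ≠ 0 := by
      rintro rfl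
      exact xadj 0 le_rfl hik h0
    have x1 : part (x (0 + 1)) ≠ part (x (i + 1)) := by
      rw [← h0]; exact (xadj 0 le_rfl (by omega)).symm
    exact M2 0 m le_rfl (by omega) a1
      (Hdom _ (H (i - 1).toNat (0 + 1) (by omega) (by omega)) x1 m hmZ)
  · exact M0 m (Hdom 0 H0 h0 m hmZ)

theorem orbit13 {V : Type*} [Finite V] (σ : Equiv.Perm V) (v : V) :
    ∃ n : ℤ, 1 ≤ n ∧ (∀ j : ℤ, (σ ^ (j + n)) v = (σ ^ j) v) ∧
      (seg13 (fun j : ℤ => (σ ^ j) v) 0 n).Nodup ∧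
      (∀ w, w ∈ seg13 (fun j : ℤ => (σ ^ j) v) 0 n ↔ ∃ j : ℤ, (σ ^ j) v = w) := by
  have hpos : 0 < Function.minimalPeriod σ v := by
    apply Function.IsPeriodicPt.minimalPeriod_pos (orderOf_pos σ)
    show σ^[orderOf σ] v = v
    rw [Equiv.Perm.iterate_eq_pow, pow_orderOf_eq_one]; rfl
  set n := Function.minimalPeriod σ v with hn
  have hper : ∀ j : ℤ, (σ ^ (j + (n:ℤ))) v = (σ ^ j) v := by
    intro j
    rw [zpow_add, Equiv.Perm.mul_apply, zpow_natCast, ← Equiv.Perm.iterate_eq_pow,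
      Function.iterate_minimalPeriod]
  refine ⟨n, by omega, hper, ?_, ?_⟩
  · unfold seg13
    refine List.Nodup.map_on ?_ List.nodup_range
    intro a ha b hb hab
    simp at ha hb hab
    rw [← Equiv.Perm.iterate_eq_pow, ← Equiv.Perm.iterate_eq_pow] at hab
    exact Function.iterate_injOn_Iio_minimalPeriod ha hb hab
  · intro w
    constructor
    · intro hw
      unfold seg13 at hw
      simp only [List.mem_map] at hw
      obtain ⟨t, _, ht⟩ := hw
      exact ⟨_, ht⟩
    · rintro ⟨j, rfl⟩
      have h1 := (seg13_rot (fun j : ℤ => (σ ^ j) v) n (by omega) hper j).mem_iff (a := (σ ^ j) v)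
      rw [← h1, ← seg13_append _ j (j + 1) _ (by omega) (by omega), seg13_single]
      simp

theorem extend13 {V : Type*} [Fintype V] {p : ℕ} (A : V → V → Prop) (part : V → Fin p)
    (hsmd : IsSemicompleteMultipartite A part) (σ : Equiv.Perm V) :
    ∀ (d : ℕ) (L : List V), Fintype.card V - L.length ≤ d → L ≠ [] → L.Nodup → L.IsChain A →
      (∀ v, v ∈ L ↔ σ v ∈ L) → (∀ v, v ∉ L → A v (σ v)) →
      ∃ L' : List V, L'.Nodup ∧ L'.IsChain A ∧ ∀ v, v ∈ L' := by
  intro d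
  induction d with
  | zero =>
    intro L hd hne hnd hch hcl hA
    refine ⟨L, hnd, hch, ?_⟩
    classical
    have h1 : L.toFinset.card = L.length := List.toFinset_card_of_nodup hnd
    have h2 : L.toFinset = Finset.univ := by
      apply Finset.eq_univ_of_card
      have := Finset.card_le_univ L.toFinset
      omega
    intro v
    rw [← List.mem_toFinset, h2]; simp
  | succ d ih =>
    intro L hd hne hnd hch hcl hA
    by_cases hall : ∀ v, v ∈ L
    · exact ⟨L, hnd, hch, hall⟩
    push Not at hall
    obtain ⟨v, hv⟩ := hall
    obtain ⟨n, hn, hper, hcn, hcm⟩ := orbit13 σ v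
    have hcl' : ∀ (j : ℤ), (σ ^ j) v ∉ L := by
      intro j
      induction j using Int.induction_on with
      | zero => simpa using hv
      | succ i ih => rwa [add_comm, zpow_add, zpow_one, Equiv.Perm.mul_apply, ← hcl]
      | pred i ih =>
        rw [hcl, ← Equiv.Perm.mul_apply, ← zpow_one_add]
        simpa using ih
    have hsucc : ∀ j : ℤ, (σ ^ (j + 1)) v = σ ((σ ^ j) v) := by
      intro j; rw [add_comm, zpow_add, zpow_one, Equiv.Perm.mul_apply]
    have hlen : 0 < L.length := List.length_pos_iff.2 hne
    have hLseg : seg13 (fun i : ℤ => L.getD i.toNat v) 0 L.length = L := by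
      unfold seg13
      apply List.ext_getElem
      · simp
      · intro i h1 h2
        simp [h2]
    obtain ⟨L', hL'ch, hL'p⟩ := merge13 A part hsmd (fun i : ℤ => L.getD i.toNat v) L.length
      (by omega) (by
        intro i h0 h1
        obtain ⟨q, rfl⟩ := Int.eq_ofNat_of_zero_le h0
        have hq : q + 1 < L.length := by omega
        have e : ((q:ℤ) + 1).toNat = q + 1 := by omega
        have := List.isChain_iff_getElem.1 hch q hq
        simpa [e, hq, Nat.lt_of_succ_lt hq] using this)
      (fun j : ℤ => (σ ^ j) v) n hn hper (by
        intro j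
        simp only [hsucc]
        exact hA _ (hcl' j))
    rw [hLseg] at hL'p
    have hmem : ∀ w, w ∈ L' ↔ w ∈ L ∨ ∃ j : ℤ, (σ ^ j) v = w := by
      intro w
      rw [hL'p.mem_iff, List.mem_append, hcm]
    refine ih L' ?_ ?_ ?_ hL'ch ?_ ?_
    · have := hL'p.length_eq
      rw [List.length_append] at this
      have h2 : (seg13 (fun j : ℤ => (σ ^ j) v) 0 n).length = n.toNat := by simp [seg13]
      omega
    · rintro rfl
      have := (hmem v).2 (Or.inr ⟨0, by simp⟩)
      simp at this
    · rw [hL'p.nodup_iff, List.nodup_append]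
      refine ⟨hnd, hcn, ?_⟩
      intro a ha b hb hab
      obtain ⟨j, hj⟩ := (hcm b).1 hb
      apply hcl' j
      rw [hj, ← hab]; exact ha
    · intro w
      rw [hmem, hmem, ← hcl]
      refine or_congr Iff.rfl ⟨?_, ?_⟩
      · rintro ⟨j, rfl⟩
        exact ⟨j + 1, hsucc j⟩
      · rintro ⟨j, hj⟩
        refine ⟨j - 1, σ.injective ?_⟩
        rw [← hj, ← hsucc]; simp
    · intro w hw
      exact hA w (fun h => hw ((hmem w).2 (Or.inl h)))

theorem indeg13 {V : Type*} [Fintype V] (F : V → V → Prop) (v : V) :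
    indeg F v = 0 ↔ ∀ u, ¬ F u v := by
  unfold indeg
  rw [Finite.card_eq_zero_iff, isEmpty_subtype]

theorem outdeg13 {V : Type*} [Fintype V] (F : V → V → Prop) (v : V) :
    outdeg F v = 0 ↔ ∀ u, ¬ F v u := by
  unfold outdeg
  rw [Finite.card_eq_zero_iff, isEmpty_subtype]

theorem indeg13' {V : Type*} [Fintype V] (F : V → V → Prop) (v : V) :
    indeg F v ≤ 1 ↔ ∀ u w, F u v → F w v → u = w := by
  unfold indeg
  rw [Finite.card_le_one_iff_subsingleton, subsingleton_iff]
  simp only [Subtype.forall, Subtype.mk.injEq]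
  exact ⟨fun h u w hu hw => h u hu w hw, fun h u hu w hw => h u w hu hw⟩

theorem outdeg13' {V : Type*} [Fintype V] (F : V → V → Prop) (v : V) :
    outdeg F v ≤ 1 ↔ ∀ u w, F v u → F v w → u = w := by
  unfold outdeg
  rw [Finite.card_le_one_iff_subsingleton, subsingleton_iff]
  simp only [Subtype.forall, Subtype.mk.injEq]
  exact ⟨fun h u w hu hw => h u hu w hw, fun h u hu w hw => h u w hu hw⟩

theorem fwd13 {V : Type*} [Fintype V] [Nonempty V] (A : V → V → Prop)
    (f : Fin (Fintype.card V) ≃ V) (hf : IsHamDipath A f) :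
    ∃ F : V → V → Prop, IsOnePathCycleFactor A F := by
  have hpos : 0 < Fintype.card V := Fintype.card_pos
  refine ⟨fun u v => (f.symm u).1 + 1 = (f.symm v).1, ?_, ?_, ?_, ?_⟩
  · intro u v h
    have := hf (f.symm u).1 (by rw [h]; exact (f.symm v).2)
    simpa [h] using this
  · intro v
    rw [outdeg13', indeg13']
    constructor
    · intro u w h1 h2
      exact f.symm.injective (Fin.ext (by omega))
    · intro u w h1 h2
      exact f.symm.injective (Fin.ext (by omega))
  · refine ⟨f ⟨0, hpos⟩, ?_, ?_⟩
    · simp only [indeg13]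
      intro u; simp
    · intro y hy
      simp only [indeg13] at hy
      rw [← Equiv.symm_apply_eq]
      apply Fin.ext
      by_contra h
      simp only at h
      apply hy (f ⟨(f.symm y).1 - 1, by omega⟩)
      simp; omega
  · refine ⟨f ⟨Fintype.card V - 1, by omega⟩, ?_, ?_⟩
    · simp only [outdeg13]
      intro u; simp; omega
    · intro y hy
      simp only [outdeg13] at hy
      rw [← Equiv.symm_apply_eq]
      apply Fin.ext
      by_contra h
      simp only at h
      apply hy (f ⟨(f.symm y).1 + 1, by omega⟩)
      simp

theorem bwd13 {V : Type*} [Fintype V] {p : ℕ}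
    (A : V → V → Prop) (part : V → Fin p)
    (hsmd : IsSemicompleteMultipartite A part) (F : V → V → Prop)
    (hF : IsOnePathCycleFactor A F) :
    ∃ f : Fin (Fintype.card V) ≃ V, IsHamDipath A f := by
  classical
  obtain ⟨hFA, hdeg, ⟨s, hs, hs'⟩, ⟨t, ht, ht'⟩⟩ := hF
  simp only [indeg13, outdeg13, indeg13', outdeg13'] at hdeg hs hs' ht ht'
  have hnext : ∀ v, ∃ w, (v ≠ t → F v w) ∧ (v = t → w = s) := by
    intro v
    by_cases h : v = t
    · exact ⟨s, fun h' => absurd h h', fun _ => rfl⟩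
    · have : ∃ w, F v w := by
        by_contra hc
        push Not at hc
        exact h (ht' v hc)
      obtain ⟨w, hw⟩ := this
      exact ⟨w, fun _ => hw, fun h' => absurd h' h⟩
  choose g hg1 hg2 using hnext
  have ginj : Function.Injective g := by
    intro a b hab
    by_cases ha : a = t <;> by_cases hb : b = t
    · rw [ha, hb]
    · have := hg1 b hb
      rw [← hab, hg2 a ha] at this
      exact absurd this (hs b)
    · have := hg1 a ha
      rw [hab, hg2 b hb] at this
      exact absurd this (hs a)
    · have h1 := hg1 a ha
      rw [hab] at h1
      exact (hdeg _).2 _ _ h1 (hg1 b hb)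
  let σ : Equiv.Perm V := Equiv.ofBijective g (Finite.injective_iff_bijective.1 ginj)
  have hσ : ∀ v, σ v = g v := fun v => rfl
  obtain ⟨n, hn, hper, hcn, hcm⟩ := orbit13 σ s
  have hsucc : ∀ j : ℤ, (σ ^ (j + 1)) s = σ ((σ ^ j) s) := by
    intro j; rw [add_comm, zpow_add, zpow_one, Equiv.Perm.mul_apply]
  have htmem : t ∈ seg13 (fun j : ℤ => (σ ^ j) s) 0 n := by
    rw [hcm]
    refine ⟨-1, σ.injective ?_⟩
    rw [← hsucc, hσ t, hg2 t rfl]; simp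
  have hpath := seg13_path' (A := A) (fun j : ℤ => (σ ^ j) s) 0 n (by omega) (by
    intro i h0 h1
    simp only [hsucc]
    rw [hσ]
    apply hFA
    apply hg1
    intro hit
    have e1 : (σ ^ (i + 1)) s = s := by rw [hsucc, hσ, hg2 _ hit]
    rw [← seg13_append _ 0 (i + 1) n (by omega) (by omega),
      ← seg13_append _ 0 (0 + 1) (i + 1) (by omega) (by omega),
      ← seg13_append _ (i + 1) (i + 1 + 1) n (by omega) (by omega), seg13_single, seg13_single,
      e1] at hcn
    simp at hcn)
  obtain ⟨L, hLn, hLc, hLall⟩ := extend13 A part hsmd σ _ _ le_rfl (by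
      intro h
      rw [h] at htmem; simp at htmem) hcn hpath.1 (by
      intro w
      rw [hcm, hcm]
      refine ⟨?_, ?_⟩
      · rintro ⟨j, rfl⟩
        exact ⟨j + 1, hsucc j⟩
      · rintro ⟨j, hj⟩
        refine ⟨j - 1, σ.injective ?_⟩
        rw [← hj, ← hsucc]; simp) (by
      intro v hv
      apply hFA
      apply hg1
      rintro rfl
      exact hv htmem)
  have hlen : L.length = Fintype.card V := by
    rw [← List.toFinset_card_of_nodup hLn, ← Finset.card_univ]
    congr 1
    ext v; simp [hLall]
  refine ⟨(finCongr hlen.symm).trans (hLn.getEquivOfForallMemList L hLall), ?_⟩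
  intro i hi
  have := List.isChain_iff_getElem.1 hLc i (by omega)
  simpa using this

/-- a semicomplete multipartite digraph has a Hamilton directed path iff
it contains a 1-path-cycle factor. -/
theorem stmt13 {V : Type*} [Fintype V] [Nonempty V] {p : ℕ} (hp : 2 ≤ p)
    (A : V → V → Prop) (part : V → Fin p)
    (hsmd : IsSemicompleteMultipartite A part) (hne : Function.Surjective part) :
    (∃ f : Fin (Fintype.card V) ≃ V, IsHamDipath A f) ↔
      ∃ F : V → V → Prop, IsOnePathCycleFactor A F := by
  constructor
  · rintro ⟨f, hf⟩
    exact fwd13 A f hf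
  · rintro ⟨F, hF⟩
    exact bwd13 A part hsmd F hF
end

section
/- Let D be a connected locally semicomplete digraph on n ≥ 3 vertices that is not strong, with acyclic ordering of strong components C₁,…,C_ℓ. If the underlying graph U(D) is 2-connected, then D has a Hamilton oriented cycle R containing a shortest directed (C₁,C_ℓ)-path P as a subpath such that the backward arcs of R are exactly the arcs of P; in particular σ_max(R) = n − d(C₁,C_ℓ). -/
/-- `A` is a locally semicomplete digraph: the out-neighbourhood and the
in-neighbourhood of each vertex induce semicomplete digraphs. -/
def LocallySemicomplete {V : Type*} (A : V → V → Prop) : Prop :=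
  ∀ x u v : V, u ≠ v →
    (A x u → A x v → A u v ∨ A v u) ∧ (A u x → A v x → A u v ∨ A v u)

/-- The digraph `A` is connected (its underlying graph is connected). -/
def DigraphConnected {V : Type*} (A : V → V → Prop) : Prop :=
  ∀ u v : V, Relation.ReflTransGen (fun a b => A a b ∨ A b a) u v

/-- The digraph `A` is strongly connected. -/
def DigraphStrong {V : Type*} (A : V → V → Prop) : Prop :=
  ∀ u v : V, Relation.ReflTransGen A u v

/-- `comp : V → Fin ℓ` is the acyclic ordering of the strong components of `A`:
its fibres are the strong components and no arc goes backwards. -/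
def IsAcyclicOrdering {V : Type*} (A : V → V → Prop) {ℓ : ℕ} (comp : V → Fin ℓ) : Prop :=
  Function.Surjective comp ∧
    (∀ u v : V, comp u = comp v ↔
      (Relation.ReflTransGen A u v ∧ Relation.ReflTransGen A v u)) ∧
    (∀ u v : V, A u v → comp u ≤ comp v)

/-- `l` lists the vertices of an `(S,T)`-path for the relation `R`: the first vertex is
in `S`, the last in `T`, and the internal vertices avoid `S ∪ T`. -/
def IsSTPathList {V : Type*} (R : V → V → Prop) (S T : Set V) (l : List V) : Prop :=
  l.Chain' R ∧ l.Nodup ∧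
    (∃ a ∈ S, l.head? = some a) ∧ (∃ b ∈ T, l.getLast? = some b) ∧
    ∀ v ∈ (l.drop 1).dropLast, v ∉ S ∪ T

/-- The length `d(S,T)` of a shortest directed `(S,T)`-path in the digraph `A`. -/
noncomputable def distST {V : Type*} (A : V → V → Prop) (S T : Set V) : ℕ :=
  sInf {m : ℕ | ∃ l : List V, IsSTPathList A S T l ∧ l.length = m + 1}

/-- The number of forward arcs of the oriented path listed by `l`. -/
noncomputable def listForward {V : Type*} (A : V → V → Prop) (l : List V) : ℕ :=
  (l.zip l.tail).countP fun p => @decide (A p.1 p.2) (Classical.propDecidable _)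

open Relation in
lemma comparable_in {V : Type*} {A : V → V → Prop} (hls : LocallySemicomplete A)
    {x z w : V} (h : ReflTransGen A x z) (hw : A w z) :
    ReflTransGen A x w ∨ ReflTransGen A w x := by
  induction h with
  | refl => exact Or.inr (.single hw)
  | tail h1 h2 ih =>
    rename_i b c
    by_cases hbw : b = w
    · subst hbw; exact Or.inl h1
    · rcases (hls c b w hbw).2 h2 hw with h | h
      · exact Or.inl (h1.tail h)
      · exact ih h

open Relation in
lemma comparable_out {V : Type*} {A : V → V → Prop} (hls : LocallySemicomplete A)
    {x z w : V} (h : ReflTransGen A z x) (hw : A z w) :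
    ReflTransGen A x w ∨ ReflTransGen A w x := by
  induction h using ReflTransGen.head_induction_on with
  | refl => exact Or.inl (.single hw)
  | head h2 h1 ih =>
    rename_i c b
    by_cases hbw : b = w
    · subst hbw; exact Or.inr h1
    · rcases (hls c b w hbw).1 h2 hw with h | h
      · exact ih h
      · exact Or.inr (h1.head h)

open Relation in
lemma comparable {V : Type*} {A : V → V → Prop} (hls : LocallySemicomplete A)
    (hconn : DigraphConnected A) (x y : V) :
    ReflTransGen A x y ∨ ReflTransGen A y x := by
  induction hconn x y with
  | refl => exact Or.inl .refl
  | tail _ h ih =>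
    rcases ih with i | i <;> rcases h with h | h
    · exact Or.inl (i.tail h)
    · exact comparable_in hls i h
    · exact comparable_out hls i h
    · exact Or.inr (i.head h)

open Relation in
lemma interval {V : Type*} {A : V → V → Prop} (hls : LocallySemicomplete A)
    (hconn : DigraphConnected A) (c : V → ℕ) (hA : ∀ u v, A u v → c u ≤ c v)
    (hC : ∀ u v, c u = c v → ReflTransGen A u v)
    (u w x y : V) (huw : A u w) (h1 : c u ≤ c x) (h2 : c x < c y) (h3 : c y ≤ c w) : A x y := by
  have hmono : ∀ u v, ReflTransGen A u v → c u ≤ c v := by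
    intro u v h
    induction h with
    | refl => exact le_rfl
    | tail _ h ih => exact ih.trans (hA _ _ h)
  have hreach : ∀ u v, c u ≤ c v → ReflTransGen A u v := by
    intro u v h
    rcases comparable hls hconn u v with h' | h'
    · exact h'
    · exact hC _ _ (le_antisymm h (hmono _ _ h'))
  have huy : A u y := by
    have hyw := hreach y w h3
    have hlt : c u < c y := by omega
    clear h3
    induction hyw using ReflTransGen.head_induction_on with
    | refl => exact huw
    | head h4 h5 ih =>
      rename_i p s
      have hps := hA _ _ h4
      have hus : A u s := by
        apply ih <;> omega
      rcases (hls s u p (by rintro rfl; omega)).2 hus h4 with h | h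
      · exact h
      · have := hA _ _ h; omega
  have hux := hreach u x h1
  clear h1
  induction hux with
  | refl => exact huy
  | tail h4 h5 ih =>
    rename_i s p
    have hps := hA _ _ h5
    have hus : A s y := by
      apply ih; omega
    rcases (hls s p y (by rintro rfl; omega)).1 h5 hus with h | h
    · exact h
    · have := hA _ _ h; omega

lemma insert_in {V : Type*} {A : V → V → Prop} (hls : LocallySemicomplete A) (w : V)
    (l1 : List V) : ∀ (x : V) (l2 : List V), (l1 ++ x :: l2).IsChain A → w ∉ l1 ++ x :: l2 →
      A w x → ∃ l' : List V, l'.IsChain A ∧ l'.Perm (w :: (l1 ++ x :: l2)) := by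
  induction l1 using List.reverseRecOn with
  | nil =>
    intro x l2 h _ hw
    exact ⟨w :: x :: l2, by simpa using ⟨hw, h⟩, .refl _⟩
  | append_singleton l1 p ih =>
    intro x l2 h hn hw
    have hpw : p ≠ w := by rintro rfl; simp at hn
    have hc := h
    simp only [List.append_assoc, List.singleton_append] at h hn
    have h' := h
    rw [List.isChain_append] at h'
    simp only [List.isChain_cons_cons] at h'
    rcases (hls x p w hpw).2 h'.2.1.1 hw with h1 | h1
    · refine ⟨l1 ++ p :: w :: x :: l2, ?_, ?_⟩
      · rw [List.isChain_append]
        refine ⟨h'.1, ?_, ?_⟩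
        · simp only [List.isChain_cons_cons]
          exact ⟨h1, hw, h'.2.1.2⟩
        · simpa using h'.2.2
      · classical
        rw [List.perm_iff_count]
        intro t
        simp only [List.count_cons, List.count_append, List.count_nil]
        omega
    · simpa using ih p (x :: l2) h hn h1

lemma insert_out {V : Type*} {A : V → V → Prop} (hls : LocallySemicomplete A) (w : V)
    (l1 : List V) (x : V) (l2 : List V) (h : (l1 ++ x :: l2).IsChain A)
    (hn : w ∉ l1 ++ x :: l2) (hw : A x w) :
    ∃ l' : List V, l'.IsChain A ∧ l'.Perm (w :: (l1 ++ x :: l2)) := by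
  have hls' : LocallySemicomplete (fun a b => A b a) := fun x u v huv =>
    ⟨fun a b => ((hls x u v huv).2 a b).symm, fun a b => ((hls x u v huv).1 a b).symm⟩
  have e : (l1 ++ x :: l2).reverse = l2.reverse ++ x :: l1.reverse := by simp
  obtain ⟨l', h1, h2⟩ := insert_in hls' w l2.reverse x l1.reverse
    (by rw [← e]; exact List.isChain_reverse.2 h)
    (by rw [← e, List.mem_reverse]; exact hn) hw
  refine ⟨l'.reverse, List.isChain_reverse.2 h1, ?_⟩
  refine (List.reverse_perm _).trans (h2.trans (List.Perm.cons _ ?_))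
  rw [← e]; exact List.reverse_perm _

lemma exists_ham {V : Type*} [Fintype V] {A : V → V → Prop} (hls : LocallySemicomplete A)
    (hconn : DigraphConnected A) (x0 : V) :
    ∃ l : List V, l.IsChain A ∧ l.Nodup ∧ (∀ x, x ∈ l) := by
  by_contra hcon
  have key : ∀ k, ∃ l : List V, l.IsChain A ∧ l.Nodup ∧ l.length = k + 1 := by
    intro k
    induction k with
    | zero => exact ⟨[x0], by simp, by simp, by simp⟩
    | succ k ih =>
      obtain ⟨l, h1, h2, h3⟩ := ih
      have : ∃ z, z ∉ l := by
        by_contra hz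
        push Not at hz
        exact hcon ⟨l, h1, h2, hz⟩
      obtain ⟨z, hz⟩ := this
      obtain ⟨y, hy⟩ := List.exists_mem_of_length_pos (l := l) (by omega)
      have : ∃ x ∈ l, ∃ w, w ∉ l ∧ (A x w ∨ A w x) := by
        by_contra hno
        push Not at hno
        apply hz
        induction hconn y z with
        | refl => exact hy
        | @tail b c' _ h ih =>
          by_contra hcc
          have hb : b ∈ l := by
            by_contra hbb
            exact hbb (ih hbb)
          have := hno _ hb _ hcc
          tauto
      obtain ⟨x, hx, w, hw, hxw⟩ := this
      obtain ⟨l1, l2, rfl⟩ := List.append_of_mem hx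
      have : ∃ l' : List V, l'.IsChain A ∧ l'.Perm (w :: (l1 ++ x :: l2)) := by
        rcases hxw with h | h
        · exact insert_out hls w l1 x l2 h1 hw h
        · exact insert_in hls w l1 x l2 h1 hw h
      obtain ⟨l', g1, g2⟩ := this
      refine ⟨l', g1, g2.nodup_iff.2 (List.nodup_cons.2 ⟨hw, h2⟩), ?_⟩
      rw [g2.length_eq, List.length_cons, h3]
  obtain ⟨l, -, h2, h3⟩ := key (Fintype.card V)
  have := h2.length_le_card
  omega

lemma core {V : Type*} (A : V → V → Prop) (c : V → ℕ) (v : ℕ → V) (N : ℕ)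
    (hA : ∀ i < N, A (v i) (v (i+1)))
    (hint : ∀ u w x y, A u w → c u ≤ c x → c x < c y → c y ≤ c w → A x y)
    (hmono : ∀ i j, i ≤ j → j ≤ N → c (v i) ≤ c (v j))
    (hsurj : ∀ x, ∃ i ≤ N, v i = x)
    (hstar : ∀ m, m+2 ≤ N → c (v m) < c (v (m+2)) → A (v m) (v (m+2))) :
    ∀ k a, N - a = k → a < N → c (v a) < c (v N) → ∃ q r : List ℕ,
      List.IsChain (fun i j => A (v i) (v j)) (a :: (q ++ [N])) ∧
      (q ++ r).Perm (List.range' (a+1) (N-1-a)) ∧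
      List.IsChain (fun i j => A (v i) (v j)) (r ++ [N]) ∧
      (r ++ [N]).head? = some (a+1) ∧
      (∀ b ∈ q, c (v a) < c (v b) ∧ c (v b) < c (v N)) ∧
      ∀ x0 x, List.IsChain A (x0 :: x) → c x0 ≤ c (v a) → (∃ y ∈ x, c y = c (v N)) →
        q.length + 1 ≤ x.length := by
  have hrange : ∀ k s, s + k ≤ N + 1 →
      List.IsChain (fun i j => A (v i) (v j)) (List.range' s k) := by
    intro k s h
    rw [List.isChain_iff_getElem]
    intro i hi
    simp at hi ⊢
    have := hA (s+i) (by omega)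
    rwa [add_assoc] at this
  intro k
  induction k using Nat.strong_induction_on with
  | _ k ih =>
  intro a hk haN hc
  classical
  let P : ℕ → Prop := fun b => c (v a) < c (v b) ∧ A (v a) (v b)
  have hex : ∃ b ≤ N, P b := by
    have h1 : ∃ b, b ≤ N ∧ c (v a) < c (v b) := ⟨N, le_rfl, hc⟩
    have h2 := Nat.find_spec h1
    have h3 := fun m => @Nat.find_min _ _ h1 m
    set b := Nat.find h1
    refine ⟨b, h2.1, h2.2, ?_⟩
    have hab : a < b := by
      by_contra h
      have := hmono b a (by omega) (by omega)
      omega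
    have h4 := h3 (b-1) (by omega)
    have h5 := hA (b-1) (by omega)
    rw [show b - 1 + 1 = b by omega] at h5
    have h6 := hmono a (b-1) (by omega) (by omega)
    have h7 : ¬ c (v a) < c (v (b-1)) := fun h => h4 ⟨by omega, h⟩
    exact hint _ _ _ _ h5 (by omega) h2.2 le_rfl
  obtain ⟨b0, hb0, hPb0⟩ := hex
  have hbP : P (Nat.findGreatest P N) := Nat.findGreatest_spec hb0 hPb0
  have hbN : Nat.findGreatest P N ≤ N := Nat.findGreatest_le N
  have hbmax : ∀ j, j ≤ N → P j → j ≤ Nat.findGreatest P N :=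
    fun j hj hPj => Nat.le_findGreatest hj hPj
  set b := Nat.findGreatest P N
  have hab : a < b := by
    by_contra h
    have := hmono b a (by omega) (by omega)
    have := hbP.1
    omega
  by_cases hbeq : b = N
  · refine ⟨[], List.range' (a+1) (N-1-a), ?_, ?_, ?_, ?_, ?_, ?_⟩
    · simp; rw [← hbeq]; exact hbP.2
    · simp
    · have := hrange (N-1-a+1) (a+1) (by omega)
      rw [List.range'_concat] at this
      rwa [show a + 1 + 1 * (N-1-a) = N by omega] at this
    · have : List.range' (a+1) (N-1-a) ++ [N] = List.range' (a+1) (N-1-a+1) := by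
        rw [List.range'_concat, show a + 1 + 1 * (N-1-a) = N by omega]
      rw [this]; simp [List.range'_succ]
    · simp
    · rintro x0 x - - ⟨y, hy, -⟩
      have := List.length_pos_of_mem hy
      simp; omega
  · have hcb : c (v b) < c (v N) := by
      by_contra h
      have : P N := ⟨hc, hint _ _ _ _ hbP.2 le_rfl hc (by omega)⟩
      have := hbmax N le_rfl this
      omega
    have hb2 : a + 2 ≤ b := by
      by_contra h
      have hba : b = a + 1 := by omega
      have hm := hmono b (a+2) (by omega) (by omega)
      have h1 : c (v a) < c (v (a+2)) := lt_of_lt_of_le hbP.1 hm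
      have := hbmax (a+2) (by omega) ⟨h1, hstar a (by omega) h1⟩
      omega
    have hcb1 : c (v b) < c (v (b+1)) := by
      by_contra h
      have h1 := hmono b (b+1) (by omega) (by omega)
      have hlt : c (v a) < c (v (b+1)) := lt_of_lt_of_le hbP.1 h1
      have := hbmax (b+1) (by omega) ⟨hlt, hint _ _ _ _ hbP.2 le_rfl hlt (by omega)⟩
      omega
    obtain ⟨q, r, h1, h2, h3, h4, h5, h6⟩ := ih (N - b) (by omega) b rfl (by omega) hcb
    refine ⟨b :: q, List.range' (a+1) (b-1-a) ++ r, ?_, ?_, ?_, ?_, ?_, ?_⟩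
    · simp only [List.cons_append, List.isChain_cons_cons]
      exact ⟨hbP.2, h1⟩
    · have e1 : List.range' (a+1) (N-1-a) =
          List.range' (a+1) (b-1-a) ++ (b :: List.range' (b+1) (N-1-b)) := by
        have e2 := List.range'_append (s := a+1) (m := b-1-a) (n := N-1-b+1) (step := 1)
        rw [show a + 1 + 1 * (b-1-a) = b by omega, List.range'_succ] at e2
        rw [e2]
        congr 1; omega
      rw [e1]
      refine List.Perm.trans ?_ (List.Perm.append_left _ (List.Perm.cons b h2))
      rw [List.perm_iff_count]
      intro t
      simp only [List.count_cons, List.count_append]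
      omega
    · rw [List.append_assoc, List.isChain_append]
      refine ⟨hrange _ _ (by omega), h3, ?_⟩
      intro x hx y hy
      rw [h4] at hy
      have hxe : x = b - 1 := by
        obtain ⟨t, ht⟩ : ∃ t, b - 1 - a = t + 1 := ⟨b - 2 - a, by omega⟩
        rw [ht, List.range'_concat] at hx
        simp at hx
        omega
      simp at hy
      subst hxe; subst hy
      have := hstar (b-1) (by omega)
      rw [show b - 1 + 2 = b + 1 by omega] at this
      apply this
      exact lt_of_le_of_lt (hmono (b-1) b (by omega) (by omega)) hcb1
    · obtain ⟨t, ht⟩ : ∃ t, b - 1 - a = t + 1 := ⟨b - 2 - a, by omega⟩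
      simp [ht, List.range'_succ]
    · intro z hz
      rcases List.mem_cons.1 hz with rfl | hz
      · exact ⟨hbP.1, hcb⟩
      · exact ⟨hbP.1.trans (h5 z hz).1, (h5 z hz).2⟩
    · rintro x0 x hx hx0 ⟨y, hy, hyc⟩
      rcases x with _ | ⟨x1, x⟩
      · simp at hy
      · rw [List.isChain_cons_cons] at hx
        have hx1 : c x1 ≤ c (v b) := by
          by_contra hcon
          have hA1 : A (v a) x1 := hint _ _ _ _ hx.1 hx0 (by have := hbP.1; omega) le_rfl
          obtain ⟨i, hi, rfl⟩ := hsurj x1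
          have := hbmax i hi ⟨by have := hbP.1; omega, hA1⟩
          have := hmono i b this hbN
          omega
        have hyx : y ∈ x := by
          rcases List.mem_cons.1 hy with rfl | h
          · omega
          · exact h
        have := h6 x1 x hx.2 hx1 ⟨y, hyx, hyc⟩
        simp; omega

lemma assemble {V : Type*} [Fintype V] (hn : 3 ≤ Fintype.card V) (A : V → V → Prop)
    (l rr : List V) (d : ℕ) (hl : l.length = d + 1) (hd : 1 ≤ d)
    (hlen : d + 1 + rr.length = Fintype.card V) (hnd : (l.reverse ++ rr).Nodup)
    (h1 : l.IsChain A) (h2 : (l[0] :: (rr ++ [l[d]])).IsChain A) :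
    ∃ (e : ZMod (Fintype.card V) ≃ V) (o : ZMod (Fintype.card V) → Bool),
      (∀ i, if o i then A (e i) (e (i + 1)) else A (e (i + 1)) (e i)) ∧
      (∀ m : Fin l.length, e (0 + (m : ℕ)) =
            l.get ⟨l.length - 1 - (m : ℕ), by have := m.isLt; omega⟩) ∧
      (∀ i, o i = false ↔ ∃ m : ℕ, m + 1 < l.length ∧ i = 0 + (m : ℕ)) ∧
      Nat.card {i : ZMod (Fintype.card V) // o i = true} = Fintype.card V - d ∧
      Nat.card {i : ZMod (Fintype.card V) // o i = false} = d := by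
  classical
  have : NeZero (Fintype.card V) := ⟨by omega⟩
  have hLlen : (l.reverse ++ rr).length = Fintype.card V := by simp; omega
  have hval : ∀ i : ZMod (Fintype.card V), i.val < (l.reverse ++ rr).length := by
    intro i; rw [hLlen]; exact ZMod.val_lt i
  let f : ZMod (Fintype.card V) → V := fun i => (l.reverse ++ rr)[i.val]'(hval i)
  have hinj : Function.Injective f := by
    intro i j hij
    exact ZMod.val_injective _ ((List.Nodup.getElem_inj_iff hnd).1 hij)
  have hbij : Function.Bijective f :=
    (Fintype.bijective_iff_injective_and_card f).2 ⟨hinj, by rw [ZMod.card]⟩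
  have hfalse : ∀ i : ZMod (Fintype.card V), decide (d ≤ i.val) = false ↔
      ∃ m : ℕ, m + 1 < l.length ∧ i = 0 + (m : ℕ) := by
    intro i
    simp only [decide_eq_false_iff_not, zero_add]
    constructor
    · intro h
      exact ⟨i.val, by omega, by simp⟩
    · rintro ⟨m, hm, rfl⟩
      rw [ZMod.val_natCast, Nat.mod_eq_of_lt (by omega)]
      omega
  have hcf : Nat.card {i : ZMod (Fintype.card V) // decide (d ≤ i.val) = false} = d := by
    have : {i : ZMod (Fintype.card V) // decide (d ≤ i.val) = false} ≃ Fin d :=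
      { toFun := fun i => ⟨i.1.val, by have := i.2; simp at this; exact this⟩
        invFun := fun m => ⟨(m : ℕ), by
          have := m.2
          rw [ZMod.val_natCast, Nat.mod_eq_of_lt (by omega)]; simp⟩
        left_inv := fun i => by simp
        right_inv := fun m => by
          have := m.2
          ext
          simp only
          rw [ZMod.val_natCast, Nat.mod_eq_of_lt (by omega)] }
    rw [Nat.card_congr this, Nat.card_fin]
  refine ⟨Equiv.ofBijective f hbij, fun i => decide (d ≤ i.val), ?_, ?_, hfalse, ?_, hcf⟩
  · intro i
    have hi := ZMod.val_lt i
    have hv : (i + 1).val = (i.val + 1) % Fintype.card V := by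
      rw [ZMod.val_add, ZMod.val_one'' (by omega)]
    simp only [Equiv.ofBijective_apply, decide_eq_true_eq, f, hv]
    split_ifs with h
    · rw [List.isChain_iff_getElem] at h2
      have h3 := h2 (i.val - d) (by simp; omega)
      by_cases hlast : i.val + 1 = Fintype.card V
      · simp only [hlast, Nat.mod_self]
        grind
      · simp only [Nat.mod_eq_of_lt (show i.val + 1 < Fintype.card V by omega)]
        grind
    · rw [List.isChain_iff_getElem] at h1
      have h3 := h1 (d - i.val - 1) (by omega)
      simp only [Nat.mod_eq_of_lt (show i.val + 1 < Fintype.card V by omega)]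
      grind
  · intro m
    have hm := m.2
    simp only [Equiv.ofBijective_apply, f, zero_add, ZMod.val_natCast,
      Nat.mod_eq_of_lt (show (m : ℕ) < Fintype.card V by omega)]
    simp only [List.get_eq_getElem]
    grind
  · have h := Fintype.card_subtype_compl
      (fun i : ZMod (Fintype.card V) => decide (d ≤ i.val) = false)
    rw [Nat.card_eq_fintype_card] at hcf ⊢
    rw [hcf, ZMod.card] at h
    rw [← h]
    apply Fintype.card_congr
    exact Equiv.subtypeEquivRight (fun i => by simp)

/-- let `D` be a connected non-strong locally semicomplete digraph on
`n ≥ 3` vertices whose underlying graph is 2-connected, with acyclic ordering of strong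
components `C₁, …, C_ℓ`. Then `D` has a Hamilton oriented cycle `R` (given by the
vertex listing `e` together with the choice `o` of arc directions) containing a
shortest directed `(C₁, C_ℓ)`-path `l` as a subpath, whose backward arcs are exactly
the arcs of `l`; in particular `σ_max(R) = n - d(C₁, C_ℓ)`. -/
theorem stmt15 {V : Type*} [Fintype V] (hn : 3 ≤ Fintype.card V)
    (A : V → V → Prop) (hls : LocallySemicomplete A) (hconn : DigraphConnected A)
    (hns : ¬ DigraphStrong A) {ℓ : ℕ} (comp : V → Fin ℓ)
    (hord : IsAcyclicOrdering A comp)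
    (c1 cl : Fin ℓ) (hc1 : ∀ d, c1 ≤ d) (hcl : ∀ d, d ≤ cl)
    (h2conn : ∀ w u v : V, u ≠ w → v ≠ w →
      Relation.ReflTransGen (fun a b => (A a b ∨ A b a) ∧ a ≠ w ∧ b ≠ w) u v) :
    ∃ (e : ZMod (Fintype.card V) ≃ V) (o : ZMod (Fintype.card V) → Bool),
      (∀ i, if o i then A (e i) (e (i + 1)) else A (e (i + 1)) (e i)) ∧
      ∃ l : List V,
        IsSTPathList A {v | comp v = c1} {v | comp v = cl} l ∧
        l.length = distST A {v | comp v = c1} {v | comp v = cl} + 1 ∧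
        ∃ j : ZMod (Fintype.card V),
          (∀ m : Fin l.length, e (j + (m : ℕ)) =
            l.get ⟨l.length - 1 - (m : ℕ), by have := m.isLt; omega⟩) ∧
          (∀ i, o i = false ↔ ∃ m : ℕ, m + 1 < l.length ∧ i = j + (m : ℕ)) ∧
          max (Nat.card {i : ZMod (Fintype.card V) // o i = true})
              (Nat.card {i : ZMod (Fintype.card V) // o i = false}) =
            Fintype.card V - distST A {v | comp v = c1} {v | comp v = cl} := by
  classical
  obtain ⟨hsurj, hcomp, harc⟩ := hord
  obtain ⟨x0⟩ : Nonempty V := Fintype.card_pos_iff.1 (by omega)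
  let c : V → ℕ := fun x => (comp x).val
  have hcA : ∀ u v, A u v → c u ≤ c v := fun u v h => harc u v h
  have hint := interval hls hconn c hcA (fun u v h => ((hcomp u v).1 (Fin.ext h)).1)
  obtain ⟨M, hM1, hM2, hM3⟩ := exists_ham hls hconn x0
  have hMlen : M.length = Fintype.card V := by
    have h := List.toFinset_card_of_nodup hM2
    have h' : M.toFinset = Finset.univ := by ext x; simp [hM3 x]
    rw [← h, h', Finset.card_univ]
  obtain ⟨N, hN⟩ : ∃ N, Fintype.card V = N + 1 := ⟨Fintype.card V - 1, by omega⟩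
  let v : ℕ → V := fun i => M.getD i x0
  have hv : ∀ i (h : i ≤ N), v i = M[i]'(by omega) := by
    intro i h
    exact List.getD_eq_getElem _ _ (by omega)
  have hvA : ∀ i < N, A (v i) (v (i+1)) := by
    intro i hi
    rw [hv i (by omega), hv (i+1) (by omega)]
    exact List.isChain_iff_getElem.1 hM1 i (by omega)
  have hvinj : ∀ i j, i ≤ N → j ≤ N → v i = v j → i = j := by
    intro i j hi hj h
    rw [hv i hi, hv j hj] at h
    exact (List.Nodup.getElem_inj_iff hM2).1 h
  have hvsurj : ∀ x, ∃ i ≤ N, v i = x := by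
    intro x
    obtain ⟨i, hi, h⟩ := List.getElem_of_mem (hM3 x)
    exact ⟨i, by omega, by rw [hv i (by omega), h]⟩
  have hmono : ∀ i j, i ≤ j → j ≤ N → c (v i) ≤ c (v j) := by
    intro i j hij
    induction j, hij using Nat.le_induction with
    | base => intro _; exact le_rfl
    | succ j _ ih => intro h; exact (ih (by omega)).trans (hcA _ _ (hvA j (by omega)))
  have hv0 : comp (v 0) = c1 := by
    obtain ⟨x, hx⟩ := hsurj c1
    obtain ⟨i, hi, rfl⟩ := hvsurj x
    have h := hmono 0 i (by omega) hi
    have h' := hc1 (comp (v 0))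
    apply le_antisymm _ h'
    rw [← hx]; exact h
  have hvN : comp (v N) = cl := by
    obtain ⟨x, hx⟩ := hsurj cl
    obtain ⟨i, hi, rfl⟩ := hvsurj x
    have h := hmono i N hi le_rfl
    apply le_antisymm (hcl _)
    rw [← hx]; exact h
  have hlt : c (v 0) < c (v N) := by
    rcases lt_or_eq_of_le (hmono 0 N (by omega) le_rfl) with h | h
    · exact h
    · exfalso
      apply hns
      have h1 : c1 = cl := by rw [← hv0, ← hvN]; exact Fin.ext h
      intro u w
      refine ((hcomp u w).1 ?_).1
      have : ∀ z, comp z = c1 := fun z => le_antisymm (h1 ▸ hcl _) (hc1 _)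
      rw [this, this]
  have hstar : ∀ m, m+2 ≤ N → c (v m) < c (v (m+2)) → A (v m) (v (m+2)) := by
    intro m hm hc
    have hcross : ∃ i j, i ≤ m ∧ m + 2 ≤ j ∧ j ≤ N ∧ (A (v i) (v j) ∨ A (v j) (v i)) := by
      by_contra hno
      push Not at hno
      have hp := h2conn (v (m+1)) (v m) (v (m+2))
        (fun h => by have := hvinj _ _ (by omega) (by omega) h; omega)
        (fun h => by have := hvinj _ _ (by omega) (by omega) h; omega)
      have hall : ∀ z, Relation.ReflTransGen
          (fun a b => (A a b ∨ A b a) ∧ a ≠ v (m+1) ∧ b ≠ v (m+1)) (v m) z →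
          ∃ i ≤ m, v i = z := by
        intro z hz
        induction hz with
        | refl => exact ⟨m, le_rfl, rfl⟩
        | @tail b z _ h ih =>
          obtain ⟨i, hi, rfl⟩ := ih
          obtain ⟨j, hj, rfl⟩ := hvsurj z
          refine ⟨j, ?_, rfl⟩
          by_contra hjm
          have hjne : j ≠ m + 1 := by rintro rfl; exact h.2.2 rfl
          have := hno i j hi (by omega) hj
          tauto
      obtain ⟨i, hi, h⟩ := hall _ hp
      have := hvinj _ _ (by omega) (by omega) h
      omega
    obtain ⟨i, j, hi, hj, hjN, hA⟩ := hcross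
    have hi' := hmono i m hi (by omega)
    have hj' := hmono (m+2) j hj hjN
    rcases hA with hA | hA
    · exact hint _ _ _ _ hA hi' hc hj'
    · have := hcA _ _ hA
      omega
  obtain ⟨q, r, g1, g2, g3, g4, g5, g6⟩ :=
    core A c v N hvA hint hmono hvsurj hstar (N - 0) 0 rfl (by omega) hlt
  have glen := g2.length_eq
  simp only [List.length_append, List.length_range'] at glen
  have hmem : ∀ i, i ∈ q ++ r → 0 < i ∧ i < N := by
    intro i hi
    have := g2.mem_iff.1 hi
    rw [List.mem_range'_1] at this
    omega
  have hnodqr : (q ++ r).Nodup := g2.nodup_iff.2 List.nodup_range'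
  have hnod : ((0 :: (q ++ [N])) ++ r).Nodup := by
    have hp : ((0 :: (q ++ [N])) ++ r).Perm (0 :: N :: (q ++ r)) := by
      rw [List.perm_iff_count]
      intro t
      simp only [List.count_cons, List.count_append, List.count_nil]
      omega
    rw [hp.nodup_iff, List.nodup_cons, List.nodup_cons]
    refine ⟨?_, ?_, hnodqr⟩
    · intro h
      rcases List.mem_cons.1 h with h | h
      · omega
      · have := hmem _ h; omega
    · intro h
      have := hmem _ h; omega
  have hleN : ∀ i ∈ (0 :: (q ++ [N])) ++ r, i ≤ N := by
    intro i hi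
    have : i = 0 ∨ i = N ∨ i ∈ q ++ r := by
      simp only [List.mem_append, List.mem_cons, List.not_mem_nil, or_false] at hi ⊢
      tauto
    rcases this with h | h | h
    · omega
    · omega
    · have := hmem _ h; omega
  let l : List V := (0 :: (q ++ [N])).map v
  have hlrnod : (l ++ r.map v).Nodup := by
    rw [← List.map_append]
    exact List.Nodup.map_on (fun i hi j hj h => hvinj i j (hleN i hi) (hleN j hj) h) hnod
  have hlchain : l.IsChain A := (List.isChain_map v).2 g1
  have hllen : l.length = (q.length + 1) + 1 := by simp [l]
  have hfchain : (v 0 :: (r.map v ++ [v N])).IsChain A := by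
    have : (0 :: (r ++ [N])).IsChain (fun i j => A (v i) (v j)) := by
      rw [List.isChain_cons]
      refine ⟨?_, g3⟩
      intro y hy
      rw [g4] at hy
      simp at hy
      subst hy
      exact hvA 0 (by omega)
    have := (List.isChain_map v).2 this
    simpa using this
  have hST : IsSTPathList A {v | comp v = c1} {v | comp v = cl} l := by
    refine ⟨hlchain, (List.nodup_append.1 hlrnod).1, ⟨v 0, hv0, by simp [l]⟩,
      ⟨v N, hvN, by simp [l, List.getLast?_cons]⟩, ?_⟩
    intro z hz
    have : z ∈ q.map v := by
      simpa [l] using hz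
    obtain ⟨b, hb, rfl⟩ := List.mem_map.1 this
    have h5 := g5 b hb
    rintro (h | h)
    · have h' : comp (v b) = c1 := h
      rw [← hv0] at h'
      have : c (v b) = c (v 0) := congrArg Fin.val h'
      omega
    · have h' : comp (v b) = cl := h
      rw [← hvN] at h'
      have : c (v b) = c (v N) := congrArg Fin.val h'
      omega
  have hdist : distST A {v | comp v = c1} {v | comp v = cl} = q.length + 1 := by
    apply le_antisymm
    · exact Nat.sInf_le ⟨l, hST, hllen⟩
    · refine le_csInf ⟨_, l, hST, hllen⟩ ?_
      rintro m ⟨p, ⟨hp1, -, ⟨a, ha, hpa⟩, ⟨b, hb, hpb⟩, -⟩, hpl⟩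
      rcases p with _ | ⟨x, p⟩
      · simp at hpa
      · simp only [List.head?_cons, Option.some.injEq] at hpa
        subst hpa
        have hbp : b ∈ x :: p := List.mem_of_getLast? hpb
        have hxc : c x = c (v 0) := by
          have h' : comp x = c1 := ha
          rw [← hv0] at h'
          exact congrArg Fin.val h'
        have hbc : c b = c (v N) := by
          have h' : comp b = cl := hb
          rw [← hvN] at h'
          exact congrArg Fin.val h'
        have hbp' : b ∈ p := by
          rcases List.mem_cons.1 hbp with rfl | h
          · omega
          · exact h
        have := g6 x p hp1 hxc.le ⟨b, hbp', hbc⟩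
        simp at hpl
        omega
  have hrq : q.length + 1 ≤ r.length + 1 := by
    have := g6 (v 0) (r.map v ++ [v N]) hfchain le_rfl ⟨v N, by simp, rfl⟩
    simpa using this
  obtain ⟨e, o, k1, k2, k3, k4, k5⟩ := assemble hn A l (r.map v) (q.length + 1) hllen (by omega)
    (by simp; omega)
    (by
      have : (l.reverse ++ r.map v).Perm (l ++ r.map v) :=
        List.Perm.append_right _ (List.reverse_perm _)
      exact this.nodup_iff.2 hlrnod)
    hlchain
    (by
      have e1 : l[0] = v 0 := by simp [l]
      have e2 : l[q.length + 1] = v N := by simp [l]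
      rw [e1, e2]
      exact hfchain)
  refine ⟨e, o, k1, l, hST, by rw [hdist, hllen], 0, k2, k3, ?_⟩
  rw [k4, k5, hdist]
  apply max_eq_left
  omega
end
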